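/- Let m ≥ 1 be an integer and let u be a classical m-equivariant solution of CSS on I = (−1,0) such that ‖u(t,·)‖_{L²}² = 8π(m+1) for all t ∈ (−1,0) and ‖∂_r u(t,·)‖_{L²} → ∞ as t ↗ 0. Then for every R > 0 and every smooth φ : [0,∞) → [0,1] with φ = 1 on [0,1] and φ = 0 on [2,∞), the localized virial functional vanishes at the blowup time: lim_{t↗0} 2π·∫₀^∞ φ(r/R)·Im( conj(u(t,r))·r·∂_r u(t,r) )·r dr = 0. -/

import Mathlib

open MeasureTheory Set Filter

noncomputable section

/-- The Jackiw–Pi vortex `Q(r) = √8 (m+1) r^m / (1 + r^(2m+2))`. -/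
def Q (m : ℕ) (r : ℝ) : ℝ :=
  Real.sqrt 8 * (m + 1) * r ^ m / (1 + r ^ (2 * m + 2))

/-- `A_θ[u](r) = -(1/2) ∫₀^r |u(r')|² r' dr'`. -/
def Atheta (u : ℝ → ℂ) (r : ℝ) : ℝ :=
  -(1 / 2) * ∫ s in (0:ℝ)..r, ‖u s‖ ^ 2 * s

/-- Bilinear version `A_θ[f,g](r) = -(1/2) ∫₀^r Re(conj f g) r' dr'`. -/
def Atheta2 (f g : ℝ → ℂ) (r : ℝ) : ℝ :=
  -(1 / 2) * ∫ s in (0:ℝ)..r, ((starRingEnd ℂ) (f s) * g s).re * s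

/-- `A_t[u](r) = -∫_r^∞ (m + A_θ[u](r')) |u(r')|² / r' dr'`. -/
def At (m : ℕ) (u : ℝ → ℂ) (r : ℝ) : ℝ :=
  -∫ s in Set.Ioi r, ((m : ℝ) + Atheta u s) * ‖u s‖ ^ 2 / s

/-- Squared (2D radial) `L²` norm: `‖u‖² = 2π ∫₀^∞ |u(r)|² r dr`. -/
def L2sq (u : ℝ → ℂ) : ℝ :=
  2 * Real.pi * ∫ r in Set.Ioi (0:ℝ), ‖u r‖ ^ 2 * r

/-- Squared equivariant `Ḣ¹_m` norm. -/
def H1msq (m : ℕ) (u : ℝ → ℂ) : ℝ :=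
  2 * Real.pi * ∫ r in Set.Ioi (0:ℝ), (‖deriv u r‖ ^ 2 + (m : ℝ) ^ 2 * ‖u r‖ ^ 2 / r ^ 2) * r

/-- The energy functional. -/
def Energy (m : ℕ) (u : ℝ → ℂ) : ℝ :=
  2 * Real.pi * ∫ r in Set.Ioi (0:ℝ),
    ((1 / 2) * ‖deriv u r‖ ^ 2
      + (1 / 2) * (((m : ℝ) + Atheta u r) / r) ^ 2 * ‖u r‖ ^ 2
      - (1 / 4) * ‖u r‖ ^ 4) * r

/-- The Chern–Simons–Schrödinger equation at the point `(t, r)`: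
`i ∂_t u - A_t[u] u + ∂_r² u + (1/r) ∂_r u - ((m + A_θ[u])/r)² u + |u|² u = 0`. -/
def CSSeq (m : ℕ) (u : ℝ → ℝ → ℂ) (t r : ℝ) : Prop :=
  Complex.I * deriv (fun s => u s r) t
    - (At m (u t) r : ℂ) * u t r
    + deriv (deriv (u t)) r
    + (1 / (r : ℂ)) * deriv (u t) r
    - ((((m : ℝ) + Atheta (u t) r) / r : ℝ) : ℂ) ^ 2 * u t r
    + ((‖u t r‖ : ℝ) : ℂ) ^ 2 * u t r = 0

/-- A classical `m`-equivariant solution of CSS on the open interval `I`. -/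
structure IsCSS (m : ℕ) (I : Set ℝ) (u : ℝ → ℝ → ℂ) : Prop where
  smooth : ContDiffOn ℝ (⊤ : ℕ∞) (fun p : ℝ × ℝ => u p.1 p.2) (I ×ˢ Set.Ioi (0:ℝ))
  integrable : ∀ t ∈ I, IntegrableOn (fun r => ‖u t r‖ ^ 2 * r) (Set.Ioi (0:ℝ))
  equivariant : ∃ U : ℝ → ℝ × ℝ → ℂ,
    ContDiffOn ℝ (⊤ : ℕ∞) (fun p : ℝ × (ℝ × ℝ) => U p.1 p.2) (I ×ˢ (Set.univ : Set (ℝ × ℝ))) ∧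
    ∀ t ∈ I, ∀ x : ℝ × ℝ, x ≠ 0 →
      U t x = u t (Real.sqrt (x.1 ^ 2 + x.2 ^ 2)) *
        (((x.1 : ℂ) + (x.2 : ℂ) * Complex.I) / ((Real.sqrt (x.1 ^ 2 + x.2 ^ 2) : ℝ) : ℂ)) ^ m
  bounded : ∀ J : Set ℝ, J ⊆ I → IsCompact J → ∃ C : ℝ, ∀ t ∈ J,
    Real.sqrt (L2sq (u t)) + Real.sqrt (H1msq m (u t)) ≤ C
  eq : ∀ t ∈ I, ∀ r : ℝ, 0 < r → CSSeq m u t r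

/-- Tightness: uniformly small mass near spatial infinity. -/
def Tight (I : Set ℝ) (u : ℝ → ℝ → ℂ) : Prop :=
  ∀ η : ℝ, 0 < η → ∃ R : ℝ, ∀ t ∈ I,
    2 * Real.pi * ∫ r in Set.Ioi R, ‖u t r‖ ^ 2 * r < η

/-- The real inner product `(f,g)_r = Re (2π ∫₀^∞ f conj(g) r dr)`. -/
def iprod (f g : ℝ → ℂ) : ℝ :=
  2 * Real.pi * (∫ r in Set.Ioi (0:ℝ), f r * (starRingEnd ℂ) (g r) * (r : ℂ)).re

/-- `ΛQ = r Q' + Q`. -/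
def LamQ (m : ℕ) (r : ℝ) : ℝ := r * deriv (Q m) r + Q m r

/-- The linearized Bogomol'nyi operator `L_Q`. -/
def LQ (m : ℕ) (f : ℝ → ℂ) (r : ℝ) : ℂ :=
  deriv f r - ((((m : ℝ) + Atheta (fun s => (Q m s : ℂ)) r) / r : ℝ) : ℂ) * f r
    - ((2 * Atheta2 (fun s => (Q m s : ℂ)) f r / r : ℝ) : ℂ) * (Q m r : ℂ)

end

noncomputable section
/-- `Im (conj a * b)`. -/
def jm (a b : ℂ) : ℝ := a.re * b.im - a.im * b.re
/-- `Re (conj a * b)`. -/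
def jr (a b : ℂ) : ℝ := a.re * b.re + a.im * b.im

lemma nsq (a : ℂ) : ‖a‖ ^ 2 = a.re ^ 2 + a.im ^ 2 := by
  rw [Complex.sq_norm, Complex.normSq_apply]; ring

lemma jm_sq_le (a b : ℂ) : jm a b ^ 2 ≤ ‖a‖ ^ 2 * ‖b‖ ^ 2 := by
  rw [nsq, nsq, jm]; nlinarith [sq_nonneg (a.re * b.re + a.im * b.im)]

lemma jr_sq_le (a b : ℂ) : jr a b ^ 2 ≤ ‖a‖ ^ 2 * ‖b‖ ^ 2 := by
  rw [nsq, nsq, jr]; nlinarith [sq_nonneg (a.re * b.im - a.im * b.re)]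

lemma abs_jm_le (a b : ℂ) : |jm a b| ≤ ‖a‖ * ‖b‖ := by
  apply abs_le_of_sq_le_sq _ (by positivity)
  rw [mul_pow]; exact jm_sq_le a b

lemma abs_jr_le (a b : ℂ) : |jr a b| ≤ ‖a‖ * ‖b‖ := by
  apply abs_le_of_sq_le_sq _ (by positivity)
  rw [mul_pow]; exact jr_sq_le a b

lemma hda_re {z : ℝ → ℂ} {z' : ℂ} {x : ℝ} (h : HasDerivAt z z' x) :
    HasDerivAt (fun y => (z y).re) z'.re x :=
  Complex.reCLM.hasFDerivAt.comp_hasDerivAt x h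

lemma hda_im {z : ℝ → ℂ} {z' : ℂ} {x : ℝ} (h : HasDerivAt z z' x) :
    HasDerivAt (fun y => (z y).im) z'.im x :=
  Complex.imCLM.hasFDerivAt.comp_hasDerivAt x h

lemma hda_jm {a b : ℝ → ℂ} {a' b' : ℂ} {x : ℝ} (ha : HasDerivAt a a' x) (hb : HasDerivAt b b' x) :
    HasDerivAt (fun y => jm (a y) (b y)) (jm a' (b x) + jm (a x) b') x := by
  have := ((hda_re ha).mul (hda_im hb)).sub ((hda_im ha).mul (hda_re hb))
  refine this.congr_deriv ?_
  simp only [jm]; ring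

lemma hda_jr {a b : ℝ → ℂ} {a' b' : ℂ} {x : ℝ} (ha : HasDerivAt a a' x) (hb : HasDerivAt b b' x) :
    HasDerivAt (fun y => jr (a y) (b y)) (jr a' (b x) + jr (a x) b') x := by
  have := ((hda_re ha).mul (hda_re hb)).add ((hda_im ha).mul (hda_im hb))
  refine this.congr_deriv ?_
  simp only [jr]; ring

lemma hda_nsq {a : ℝ → ℂ} {a' : ℂ} {x : ℝ} (ha : HasDerivAt a a' x) :
    HasDerivAt (fun y => ‖a y‖ ^ 2) (2 * jr (a x) a') x := by
  have := hda_jr ha ha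
  have e : (fun y => jr (a y) (a y)) = fun y => ‖a y‖ ^ 2 := by
    funext y; rw [nsq, jr]; ring
  rw [e] at this
  refine this.congr_deriv ?_
  simp only [jr]; ring

@[fun_prop]
lemma cont_jm {X : Type*} [TopologicalSpace X] {a b : X → ℂ} (ha : Continuous a) (hb : Continuous b) :
    Continuous (fun x => jm (a x) (b x)) := by
  unfold jm; fun_prop
@[fun_prop]
lemma cont_jr {X : Type*} [TopologicalSpace X] {a b : X → ℂ} (ha : Continuous a) (hb : Continuous b) :
    Continuous (fun x => jr (a x) (b x)) := by
  unfold jr; fun_prop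

/-- differentiation under the integral sign for globally continuous data -/
lemma pid {E : Type*} [NormedAddCommGroup E] [NormedSpace ℝ E]
    {F F' : ℝ → ℝ → E} (hF : Continuous (Function.uncurry F))
    (hF' : Continuous (Function.uncurry F')) (h : ∀ x s, HasDerivAt (fun y => F y s) (F' x s) x)
    (a b x : ℝ) :
    HasDerivAt (fun y => ∫ s in a..b, F y s) (∫ s in a..b, F' x s) x := by
  have hc : IsCompact (Set.Icc (x-1) (x+1) ×ˢ Set.uIcc a b) := isCompact_Icc.prod isCompact_uIcc
  obtain ⟨C, hC⟩ := hc.exists_bound_of_continuousOn hF'.continuousOn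
  have c1 : ∀ y, Continuous (F y) := fun y => hF.comp (by fun_prop : Continuous fun s => (y, s))
  have c2 : ∀ y, Continuous (F' y) := fun y => hF'.comp (by fun_prop : Continuous fun s => (y, s))
  refine (intervalIntegral.hasDerivAt_integral_of_dominated_loc_of_deriv_le
    (s := Set.Icc (x-1) (x+1)) (bound := fun _ => C) (Icc_mem_nhds (by linarith) (by linarith))
    (Eventually.of_forall fun y => (c1 y).aestronglyMeasurable)
    ((c1 x).intervalIntegrable _ _) (c2 x).aestronglyMeasurable ?_ (by simp) ?_).2
  · refine Eventually.of_forall fun s hs y hy => hC (y, s) ⟨hy, Set.uIoc_subset_uIcc hs⟩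
  · exact Eventually.of_forall fun s hs y hy => h y s

set_option maxHeartbeats 1000000 in
/-- static flux estimate -/
lemma flux_est {z z1 z2 P : ℝ → ℂ} {k M K B L : ℝ} (hL : 1 ≤ L)
    (hz : ∀ x, HasDerivAt z (z1 x) x) (hz1 : ∀ x, HasDerivAt z1 (z2 x) x) (hz2 : Continuous z2)
    (hPc : Continuous P)
    (hP : ∀ x, (Real.exp (2 * x) : ℂ) * P x = - z2 x + (k ^ 2 : ℝ) * z x)
    (hM : ∀ x ≤ 0, ‖z x‖ ≤ M)
    (hK : ∫ x in (-L)..L, ‖z x‖ ^ 2 * Real.exp (2 * x) ≤ K)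
    (hB : ∫ x in (-L)..L, ‖P x‖ ^ 2 * Real.exp (2 * x) ≤ B) :
    |∫ x in (-L)..L, (1 - (x / L) ^ 2) ^ 2 * jm (z x) (P x) * Real.exp (2 * x)|
      ≤ (K + B + 40 * (M ^ 2 + K)) / Real.sqrt L := by
  have cz : Continuous z := continuous_iff_continuousAt.2 fun x => (hz x).continuousAt
  have cz1 : Continuous z1 := continuous_iff_continuousAt.2 fun x => (hz1 x).continuousAt
  have L0 : 0 < L := by linarith
  set χ : ℝ → ℝ := fun x => 1 - (x / L) ^ 2 with hχ
  set χ' : ℝ → ℝ := fun x => - (2 * x / L ^ 2) with hχ'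
  have dχ : ∀ x, HasDerivAt χ (χ' x) x := by
    intro x
    have := (((hasDerivAt_id x).div_const L).pow 2).const_sub 1
    refine this.congr_deriv ?_
    simp only [hχ', id]; field_simp; push_cast; field_simp
  have cχ : Continuous χ := by fun_prop
  have cχ' : Continuous χ' := by fun_prop
  have hle : -L ≤ L := by linarith
  have χL : χ L = 0 := by simp only [hχ]; field_simp; ring
  have χL' : χ (-L) = 0 := by simp only [hχ]; field_simp; ring
  -- components of hP
  have hPre : ∀ x, Real.exp (2 * x) * (P x).re = - (z2 x).re + k ^ 2 * (z x).re := by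
    intro x
    have := congrArg Complex.re (hP x)
    rwa [Complex.re_ofReal_mul, Complex.add_re, Complex.neg_re, Complex.re_ofReal_mul] at this
  have hPim : ∀ x, Real.exp (2 * x) * (P x).im = - (z2 x).im + k ^ 2 * (z x).im := by
    intro x
    have := congrArg Complex.im (hP x)
    rwa [Complex.im_ofReal_mul, Complex.add_im, Complex.neg_im, Complex.im_ofReal_mul] at this
  -- imaginary identity
  have idI : ∫ x in (-L)..L, (χ x ^ 2 * jm (z x) (P x) * Real.exp (2 * x)
      - 2 * χ x * χ' x * jm (z x) (z1 x)) = 0 := by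
    have h := intervalIntegral.integral_eq_sub_of_hasDerivAt (a := -L) (b := L)
      (f := fun x => - (χ x ^ 2 * jm (z x) (z1 x)))
      (f' := fun x => χ x ^ 2 * jm (z x) (P x) * Real.exp (2 * x)
      - 2 * χ x * χ' x * jm (z x) (z1 x)) ?_ ?_
    · rw [h]; simp only [χL, χL']; ring
    · intro x _
      refine (((dχ x).pow 2).mul (hda_jm (hz x) (hz1 x))).neg.congr_deriv ?_
      simp only [jm, Pi.pow_apply, Nat.cast_ofNat, Nat.add_one_sub_one, pow_one]
      linear_combination (-χ x ^ 2 * (z x).re) * hPim x + (χ x ^ 2 * (z x).im) * hPre x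
    · exact Continuous.intervalIntegrable (by fun_prop) _ _
  have idR : ∫ x in (-L)..L, (χ x ^ 2 * jr (z x) (P x) * Real.exp (2 * x)
      - 2 * χ x * χ' x * jr (z x) (z1 x) - χ x ^ 2 * ‖z1 x‖ ^ 2
      - χ x ^ 2 * k ^ 2 * ‖z x‖ ^ 2) = 0 := by
    have h := intervalIntegral.integral_eq_sub_of_hasDerivAt (a := -L) (b := L)
      (f := fun x => - (χ x ^ 2 * jr (z x) (z1 x)))
      (f' := fun x => χ x ^ 2 * jr (z x) (P x) * Real.exp (2 * x)
      - 2 * χ x * χ' x * jr (z x) (z1 x) - χ x ^ 2 * ‖z1 x‖ ^ 2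
      - χ x ^ 2 * k ^ 2 * ‖z x‖ ^ 2) ?_ ?_
    · rw [h]; simp only [χL, χL']; ring
    · intro x _
      refine (((dχ x).pow 2).mul (hda_jr (hz x) (hz1 x))).neg.congr_deriv ?_
      simp only [nsq, jr, Pi.pow_apply, Nat.cast_ofNat, Nat.add_one_sub_one, pow_one]
      linear_combination (-χ x ^ 2 * (z x).re) * hPre x - (χ x ^ 2 * (z x).im) * hPim x
    · exact Continuous.intervalIntegrable (by fun_prop) _ _
  have ii : ∀ {f : ℝ → ℝ}, Continuous f → IntervalIntegrable f volume (-L) L :=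
    fun h => h.intervalIntegrable _ _
  set S := ∫ x in (-L)..L, χ x ^ 2 * ‖z1 x‖ ^ 2 with hS
  set D := ∫ x in (-L)..L, χ' x ^ 2 * ‖z x‖ ^ 2 with hD
  have hχ01 : ∀ x ∈ Set.Icc (-L) L, χ x ^ 2 ≤ 1 := by
    intro x hx
    have : (x / L) ^ 2 ≤ 1 := by
      rw [div_pow, div_le_one (by positivity)]; nlinarith [hx.1, hx.2]
    have h0 : 0 ≤ (x / L) ^ 2 := by positivity
    simp only [hχ]; nlinarith
  have hK0 : 0 ≤ K := le_trans (intervalIntegral.integral_nonneg hle fun x _ => by positivity) hK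
  have hDb : D ≤ 8 * (M ^ 2 + K) / L := by
    have h1 : D ≤ ∫ x in (-L)..L, (4 / L ^ 2) * (M ^ 2 + ‖z x‖ ^ 2 * Real.exp (2 * x)) := by
      apply intervalIntegral.integral_mono_on hle (ii (by fun_prop)) (ii (by fun_prop))
      intro x hx
      have : χ' x ^ 2 ≤ 4 / L ^ 2 := by
        simp only [hχ']; rw [neg_sq, div_pow, div_le_div_iff₀ (by positivity) (by positivity)]
        have : x ^ 2 ≤ L ^ 2 := by nlinarith [hx.1, hx.2]
        nlinarith [sq_nonneg L, mul_le_mul_of_nonneg_right this (sq_nonneg L)]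
      have h2 : ‖z x‖ ^ 2 ≤ M ^ 2 + ‖z x‖ ^ 2 * Real.exp (2 * x) := by
        rcases le_total x 0 with h | h
        · have := hM x h
          have : ‖z x‖ ^ 2 ≤ M ^ 2 := by gcongr
          have := mul_nonneg (sq_nonneg ‖z x‖) (Real.exp_pos (2 * x)).le
          linarith
        · have : 1 ≤ Real.exp (2 * x) := Real.one_le_exp (by linarith)
          nlinarith [sq_nonneg ‖z x‖, sq_nonneg M]
      exact mul_le_mul this h2 (by positivity) (by positivity)
    rw [intervalIntegral.integral_const_mul, intervalIntegral.integral_add (ii (by fun_prop))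
      (ii (by fun_prop)), intervalIntegral.integral_const] at h1
    refine h1.trans ?_
    have : (4 / L ^ 2) * ((L - -L) • M ^ 2 + ∫ x in (-L)..L, ‖z x‖ ^ 2 * Real.exp (2 * x))
        ≤ 4 / L ^ 2 * (2 * L * M ^ 2 + K) := by
      gcongr; simp only [smul_eq_mul]; linarith
    refine this.trans ?_
    rw [div_mul_eq_mul_div, div_le_div_iff₀ (by positivity) (by positivity)]
    have e1 : 0 ≤ K * L * (2 * L - 1) := mul_nonneg (by positivity) (by linarith)
    nlinarith
  have hSb : S ≤ K + B + 4 * D := by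
    have h1 : 0 ≤ ∫ x in (-L)..L, ((1/2) * (‖z x‖ ^ 2 * Real.exp (2 * x))
      + (1/2) * (‖P x‖ ^ 2 * Real.exp (2 * x)) + 2 * (χ' x ^ 2 * ‖z x‖ ^ 2)
      - (1/2) * (χ x ^ 2 * ‖z1 x‖ ^ 2) - (χ x ^ 2 * jr (z x) (P x) * Real.exp (2 * x)
      - 2 * χ x * χ' x * jr (z x) (z1 x) - χ x ^ 2 * ‖z1 x‖ ^ 2
      - χ x ^ 2 * k ^ 2 * ‖z x‖ ^ 2)) := by
      apply intervalIntegral.integral_nonneg hle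
      intro x hx
      have a1 := abs_le.1 (abs_jr_le (z x) (P x))
      have a2 := jr_sq_le (z x) (z1 x)
      have a3 := hχ01 x hx
      have e0 := Real.exp_pos (2 * x)
      have b1 : χ x ^ 2 * jr (z x) (P x) ≤ (1/2) * ‖z x‖ ^ 2 + (1/2) * ‖P x‖ ^ 2 := by
        have : jr (z x) (P x) ≤ (1/2) * ‖z x‖ ^ 2 + (1/2) * ‖P x‖ ^ 2 := by
          nlinarith [sq_nonneg (‖z x‖ - ‖P x‖)]
        rcases le_total 0 (jr (z x) (P x)) with h | h
        · nlinarith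
        · have : χ x ^ 2 * jr (z x) (P x) ≤ 0 := mul_nonpos_of_nonneg_of_nonpos (sq_nonneg _) h
          have : 0 ≤ (1/2) * ‖z x‖ ^ 2 + (1/2) * ‖P x‖ ^ 2 := by positivity
          linarith
      have b2 := mul_le_mul_of_nonneg_right b1 e0.le
      have b3 : - (2 * χ x * χ' x * jr (z x) (z1 x)) ≤
          2 * (χ' x ^ 2 * ‖z x‖ ^ 2) + (1/2) * (χ x ^ 2 * ‖z1 x‖ ^ 2) := by
        have c1 := abs_le.1 (abs_jr_le ((χ' x : ℂ) * z x) ((χ x : ℂ) * z1 x))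
        have c2 : jr ((χ' x : ℂ) * z x) ((χ x : ℂ) * z1 x) = χ x * χ' x * jr (z x) (z1 x) := by
          simp only [jr, Complex.re_ofReal_mul, Complex.im_ofReal_mul]; ring
        have c3 : ‖(χ' x : ℂ) * z x‖ ^ 2 = χ' x ^ 2 * ‖z x‖ ^ 2 := by
          rw [norm_mul, mul_pow, Complex.norm_real, Real.norm_eq_abs, sq_abs]
        have c4 : ‖(χ x : ℂ) * z1 x‖ ^ 2 = χ x ^ 2 * ‖z1 x‖ ^ 2 := by
          rw [norm_mul, mul_pow, Complex.norm_real, Real.norm_eq_abs, sq_abs]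
        rw [c2] at c1
        rw [← c3, ← c4]
        nlinarith [sq_nonneg (2 * ‖(χ' x : ℂ) * z x‖ - ‖(χ x : ℂ) * z1 x‖)]
      have b4 : 0 ≤ χ x ^ 2 * k ^ 2 * ‖z x‖ ^ 2 := by positivity
      linarith
    rw [intervalIntegral.integral_sub (ii (by fun_prop)) (ii (by fun_prop)), idR,
      intervalIntegral.integral_sub (ii (by fun_prop)) (ii (by fun_prop)),
      intervalIntegral.integral_add (ii (by fun_prop)) (ii (by fun_prop)),
      intervalIntegral.integral_add (ii (by fun_prop)) (ii (by fun_prop)),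
      intervalIntegral.integral_const_mul, intervalIntegral.integral_const_mul,
      intervalIntegral.integral_const_mul, intervalIntegral.integral_const_mul] at h1
    linarith
  rw [intervalIntegral.integral_sub (ii (by fun_prop)) (ii (by fun_prop)), sub_eq_zero] at idI
  rw [idI]
  have sL : 0 < Real.sqrt L := Real.sqrt_pos.2 L0
  have sL2 : Real.sqrt L * Real.sqrt L = L := Real.mul_self_sqrt L0.le
  have h2 : ‖∫ x in (-L)..L, 2 * χ x * χ' x * jm (z x) (z1 x)‖ ≤
      ∫ x in (-L)..L, ((1 / Real.sqrt L) * (χ x ^ 2 * ‖z1 x‖ ^ 2)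
        + Real.sqrt L * (χ' x ^ 2 * ‖z x‖ ^ 2)) := by
    apply intervalIntegral.norm_integral_le_of_norm_le hle _ (ii (by fun_prop))
    refine Eventually.of_forall fun x _ => ?_
    have c1 := abs_jm_le ((χ' x : ℂ) * z x) ((χ x : ℂ) * z1 x)
    have c2 : jm ((χ' x : ℂ) * z x) ((χ x : ℂ) * z1 x) = χ x * χ' x * jm (z x) (z1 x) := by
      simp only [jm, Complex.re_ofReal_mul, Complex.im_ofReal_mul]; ring
    have c3 : ‖(χ' x : ℂ) * z x‖ ^ 2 = χ' x ^ 2 * ‖z x‖ ^ 2 := by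
      rw [norm_mul, mul_pow, Complex.norm_real, Real.norm_eq_abs, sq_abs]
    have c4 : ‖(χ x : ℂ) * z1 x‖ ^ 2 = χ x ^ 2 * ‖z1 x‖ ^ 2 := by
      rw [norm_mul, mul_pow, Complex.norm_real, Real.norm_eq_abs, sq_abs]
    rw [c2] at c1
    rw [← c3, ← c4, Real.norm_eq_abs]
    have : 2 * χ x * χ' x * jm (z x) (z1 x) = 2 * (χ x * χ' x * jm (z x) (z1 x)) := by ring
    rw [this, abs_mul, abs_two]
    set A := ‖(χ' x : ℂ) * z x‖
    set E := ‖(χ x : ℂ) * z1 x‖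
    have key : 2 * (A * E) ≤ 1 / Real.sqrt L * E ^ 2 + Real.sqrt L * A ^ 2 := by
      have : 1 / Real.sqrt L * E ^ 2 + Real.sqrt L * A ^ 2 - 2 * (A * E)
        = (1 / Real.sqrt L) * (E - Real.sqrt L * A) ^ 2 := by field_simp; ring
      have : 0 ≤ (1 / Real.sqrt L) * (E - Real.sqrt L * A) ^ 2 := by positivity
      linarith
    linarith
  rw [intervalIntegral.integral_add (ii (by fun_prop)) (ii (by fun_prop)),
      intervalIntegral.integral_const_mul, intervalIntegral.integral_const_mul] at h2
  rw [← Real.norm_eq_abs]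
  refine h2.trans ?_
  rw [le_div_iff₀ sL]
  have h3 : (1 / Real.sqrt L * S + Real.sqrt L * D) * Real.sqrt L = S + L * D := by
    field_simp; rw [Real.sq_sqrt L0.le]; ring
  have h4 : L * D ≤ 8 * (M ^ 2 + K) := by
    rw [le_div_iff₀ L0] at hDb; linarith
  have h5 : D ≤ L * D := by
    have : 0 ≤ D := intervalIntegral.integral_nonneg hle fun x _ => by positivity
    nlinarith
  rw [h3]; linarith

end

noncomputable section

/-- Steklov average in time. -/
def stk (ε : ℝ) (f : ℝ → ℝ → ℂ) (t x : ℝ) : ℂ := ∫ s in (0:ℝ)..1, f (t + ε * s) x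

/-- mass density in logarithmic variable -/
def nE (f : ℝ → ℝ → ℂ) (t x : ℝ) : ENNReal := ENNReal.ofReal (‖f t x‖ ^ 2 * Real.exp (2 * x))

lemma stk_cont3 {f : ℝ → ℝ → ℂ} (hf : Continuous (Function.uncurry f)) :
    Continuous (fun p : ℝ × (ℝ × ℝ) => stk p.1 f p.2.1 p.2.2) := by
  unfold stk
  apply intervalIntegral.continuous_parametric_intervalIntegral_of_continuous'
  exact hf.comp (by fun_prop : Continuous fun q : (ℝ × (ℝ × ℝ)) × ℝ =>
    (q.1.2.1 + q.1.1 * q.2, q.1.2.2))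

lemma stk_cont {f : ℝ → ℝ → ℂ} (hf : Continuous (Function.uncurry f)) (ε : ℝ) :
    Continuous (Function.uncurry (stk ε f)) :=
  (stk_cont3 hf).comp (by fun_prop : Continuous fun p : ℝ × ℝ => (ε, p))

lemma sec_x {E : Type*} [TopologicalSpace E] {f : ℝ → ℝ → E} (hf : Continuous (Function.uncurry f))
    (t : ℝ) : Continuous (f t) :=
  hf.comp (by fun_prop : Continuous fun x : ℝ => (t, x))

lemma sec_t {E : Type*} [TopologicalSpace E] {f : ℝ → ℝ → E} (hf : Continuous (Function.uncurry f))
    (x : ℝ) : Continuous (fun t => f t x) :=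
  hf.comp (by fun_prop : Continuous fun t : ℝ => (t, x))

lemma stk_zero (f : ℝ → ℝ → ℂ) (t x : ℝ) : stk 0 f t x = f t x := by
  simp [stk]

lemma stk_dx {f f1 : ℝ → ℝ → ℂ} (hf : Continuous (Function.uncurry f))
    (hf1 : Continuous (Function.uncurry f1)) (h : ∀ t x, HasDerivAt (f t) (f1 t x) x) (ε t x : ℝ) :
    HasDerivAt (stk ε f t) (stk ε f1 t x) x := by
  unfold stk
  apply pid (F := fun x s => f (t + ε * s) x) (F' := fun x s => f1 (t + ε * s) x)
  · exact hf.comp (by fun_prop : Continuous fun q : ℝ × ℝ => (t + ε * q.2, q.1))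
  · exact hf1.comp (by fun_prop : Continuous fun q : ℝ × ℝ => (t + ε * q.2, q.1))
  · intro x s; exact h _ _

lemma stk_eq {ε : ℝ} (hε : ε ≠ 0) (f : ℝ → ℝ → ℂ) (t x : ℝ) :
    stk ε f t x = (ε⁻¹ : ℝ) • ∫ s in t..(t + ε), f s x := by
  unfold stk
  rw [intervalIntegral.integral_comp_add_mul (fun s => f s x) hε t]
  simp

lemma stk_dt {f : ℝ → ℝ → ℂ} (hf : Continuous (Function.uncurry f)) {ε : ℝ} (hε : ε ≠ 0) (t x : ℝ) :
    HasDerivAt (fun t => stk ε f t x) ((ε⁻¹ : ℝ) • (f (t + ε) x - f t x)) t := by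
  have c := sec_t hf x
  have e : (fun t => stk ε f t x) = fun t => (ε⁻¹ : ℝ) • ((∫ s in (0:ℝ)..(t + ε), f s x)
      - ∫ s in (0:ℝ)..t, f s x) := by
    funext t
    rw [stk_eq hε, intervalIntegral.integral_interval_sub_left (c.intervalIntegrable _ _)
      (c.intervalIntegrable _ _)]
  rw [e]
  have h1 : ∀ t, HasDerivAt (fun t => ∫ s in (0:ℝ)..t, f s x) (f t x) t := fun t =>
    intervalIntegral.integral_hasDerivAt_right (c.intervalIntegrable _ _)
      (c.stronglyMeasurableAtFilter _ _) c.continuousAt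
  have h2 : HasDerivAt (fun t => ∫ s in (0:ℝ)..(t + ε), f s x) (f (t + ε) x) t := by
    have := (h1 (t + ε)).comp_add_const t ε
    exact this
  exact (h2.sub (h1 t)).const_smul (ε⁻¹ : ℝ)

lemma sq_int_le {h : ℝ → ℝ} (hh : Continuous h) :
    (∫ s in (0:ℝ)..1, h s) ^ 2 ≤ ∫ s in (0:ℝ)..1, h s ^ 2 := by
  set a := ∫ s in (0:ℝ)..1, h s with ha
  have h0 : 0 ≤ ∫ s in (0:ℝ)..1, (h s ^ 2 - 2 * a * h s + a ^ 2) := by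
    apply intervalIntegral.integral_nonneg zero_le_one
    intro x _; nlinarith [sq_nonneg (h x - a)]
  rw [intervalIntegral.integral_add ((by fun_prop : Continuous _).intervalIntegrable _ _)
    ((by fun_prop : Continuous _).intervalIntegrable _ _),
    intervalIntegral.integral_sub ((by fun_prop : Continuous _).intervalIntegrable _ _)
    ((by fun_prop : Continuous _).intervalIntegrable _ _), intervalIntegral.integral_const_mul,
    ← ha] at h0
  simp at h0
  nlinarith

lemma stk_sq_le {f : ℝ → ℝ → ℂ} (hf : Continuous (Function.uncurry f)) (ε t x : ℝ) :
    ‖stk ε f t x‖ ^ 2 ≤ ∫ s in (0:ℝ)..1, ‖f (t + ε * s) x‖ ^ 2 := by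
  have c : Continuous fun s => f (t + ε * s) x := (sec_t hf x).comp (by fun_prop)
  refine le_trans ?_ (sq_int_le c.norm)
  have := intervalIntegral.norm_integral_le_integral_norm (μ := volume)
    (f := fun s => f (t + ε * s) x) (zero_le_one (α := ℝ))
  unfold stk
  gcongr

lemma ofReal_int {f : ℝ → ℝ} (hf : Continuous f) (h0 : ∀ x, 0 ≤ f x) {a b : ℝ} (hab : a ≤ b) :
    ENNReal.ofReal (∫ x in a..b, f x) = ∫⁻ x in Ioc a b, ENNReal.ofReal (f x) := by
  rw [intervalIntegral.integral_of_le hab, ofReal_integral_eq_lintegral_ofReal]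
  · exact (hf.intervalIntegrable a b).1
  · exact Eventually.of_forall h0

lemma nE_cont {f : ℝ → ℝ → ℂ} (hf : Continuous (Function.uncurry f)) :
    Continuous (Function.uncurry (nE f)) := by
  have : Function.uncurry (nE f) = fun p : ℝ × ℝ =>
    ENNReal.ofReal (‖Function.uncurry f p‖ ^ 2 * Real.exp (2 * p.2)) := by
    funext p; rfl
  rw [this]
  exact ENNReal.continuous_ofReal.comp (by fun_prop)

lemma stk_nE_le {f : ℝ → ℝ → ℂ} (hf : Continuous (Function.uncurry f)) (ε t x : ℝ) :
    ENNReal.ofReal ((∫ s in (0:ℝ)..1, ‖f (t + ε * s) x‖ ^ 2) * Real.exp (2 * x))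
      = ∫⁻ s in Ioc (0:ℝ) 1, nE f (t + ε * s) x := by
  have c : Continuous fun s => f (t + ε * s) x := (sec_t hf x).comp (by fun_prop)
  rw [← intervalIntegral.integral_mul_const, ofReal_int (by fun_prop) (fun _ => by positivity)
    zero_le_one]
  rfl

lemma mass_stk {f : ℝ → ℝ → ℂ} (hf : Continuous (Function.uncurry f)) {ε t : ℝ} {K : ENNReal}
    (hK : ∀ s ∈ Ioc (0:ℝ) 1, ∫⁻ x, nE f (t + ε * s) x ≤ K) :
    ∫⁻ x, nE (stk ε f) t x ≤ K := by
  calc ∫⁻ x, nE (stk ε f) t x ≤ ∫⁻ x, ∫⁻ s in Ioc (0:ℝ) 1, nE f (t + ε * s) x := by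
        apply lintegral_mono
        intro x
        show _ ≤ ∫⁻ s in Ioc (0:ℝ) 1, nE f (t + ε * s) x
        rw [← stk_nE_le hf]
        apply ENNReal.ofReal_le_ofReal
        gcongr
        exact stk_sq_le hf _ _ _
    _ = ∫⁻ s in Ioc (0:ℝ) 1, ∫⁻ x, nE f (t + ε * s) x := by
        apply lintegral_lintegral_swap
        apply Measurable.aemeasurable
        exact ((nE_cont hf).comp (by fun_prop : Continuous fun q : ℝ × ℝ =>
          (t + ε * q.2, q.1))).measurable
    _ ≤ ∫⁻ s in Ioc (0:ℝ) 1, K := setLIntegral_mono measurable_const hK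
    _ = K := by simp

lemma err_ptw {v g : ℝ → ℝ → ℂ} (hv : Continuous (Function.uncurry v))
    (hg : Continuous (Function.uncurry g)) {C : ℝ} (hC0 : 0 ≤ C) (hC : ∀ t x, ‖g t x‖ ≤ C * ‖v t x‖)
    (ε t x : ℝ) :
    ENNReal.ofReal (|jm (stk ε v t x) (stk ε g t x)| * Real.exp (2 * x)) ≤
      ENNReal.ofReal C * ∫⁻ s in Ioc (0:ℝ) 1, nE v (t + ε * s) x := by
  rw [← stk_nE_le hv, ← ENNReal.ofReal_mul hC0, ← mul_assoc]
  apply ENNReal.ofReal_le_ofReal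
  gcongr
  refine (abs_jm_le _ _).trans ?_
  have c : Continuous fun s => v (t + ε * s) x := (sec_t hv x).comp (by fun_prop)
  have c' : Continuous fun s => g (t + ε * s) x := (sec_t hg x).comp (by fun_prop)
  have h1 := stk_sq_le hv ε t x
  have h2 : ‖stk ε g t x‖ ^ 2 ≤ C ^ 2 * ∫ s in (0:ℝ)..1, ‖v (t + ε * s) x‖ ^ 2 := by
    refine (stk_sq_le hg ε t x).trans ?_
    rw [← intervalIntegral.integral_const_mul]
    apply intervalIntegral.integral_mono_on zero_le_one
      ((by fun_prop : Continuous _).intervalIntegrable _ _)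
      ((by fun_prop : Continuous _).intervalIntegrable _ _)
    intro s _
    rw [← mul_pow]
    gcongr; exact hC _ _
  set A := ∫ s in (0:ℝ)..1, ‖v (t + ε * s) x‖ ^ 2
  have hA : 0 ≤ A := le_trans (sq_nonneg _) h1
  apply abs_le_of_sq_le_sq' _ (by positivity) |>.2
  rw [mul_pow]
  calc _ ≤ A * (C ^ 2 * A) := by gcongr
    _ = _ := by ring

lemma shift_le {F : ℝ → ENNReal} {a b c : ℝ} (hc0 : 0 ≤ c) (hc : c ≤ 1) :
    ∫⁻ t in Icc a b, F (t + c) ≤ ∫⁻ t in Icc a (b + 1), F t := by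
  rw [← lintegral_indicator measurableSet_Icc, ← lintegral_indicator measurableSet_Icc,
    ← lintegral_add_right_eq_self ((Icc a (b + 1)).indicator fun t => F t) c]
  apply lintegral_mono
  intro t
  by_cases h : t ∈ Icc a b
  · have h' : t + c ∈ Icc a (b + 1) := ⟨by linarith [h.1], by linarith [h.2]⟩
    simp [indicator_of_mem h, indicator_of_mem h']
  · simp [indicator_of_notMem h]

lemma tail_tendsto {v : ℝ → ℝ → ℂ} (hv : Continuous (Function.uncurry v)) {K : ENNReal} (hKt : K ≠ ⊤)
    (hK : ∀ t, ∫⁻ x, nE v t x ≤ K) (a b : ℝ) :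
    Tendsto (fun n : ℕ => ∫⁻ t in Icc a b, ∫⁻ x in (Icc (-(n:ℝ)) n)ᶜ, nE v t x) atTop (nhds 0) := by
  have hm : Measurable (Function.uncurry (nE v)) := (nE_cont hv).measurable
  have h := tendsto_lintegral_of_dominated_convergence (μ := volume.restrict (Icc a b))
    (F := fun (n : ℕ) t => ∫⁻ x in (Icc (-(n:ℝ)) n)ᶜ, nE v t x) (f := fun _ => 0) (fun _ => K)
    (fun n => hm.lintegral_prod_right')
    (fun n => Eventually.of_forall fun t => (setLIntegral_le_lintegral _ _).trans (hK t))
    (by simp [ENNReal.mul_eq_top, hKt]) (Eventually.of_forall fun t => ?_)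
  · simpa using h
  · have hmt : Measurable (nE v t) := (sec_x (nE_cont hv) t).measurable
    have h1 : ∀ n : ℕ, ∫⁻ x in (Icc (-(n:ℝ)) n)ᶜ, nE v t x =
      ∫⁻ x, (Icc (-(n:ℝ)) n)ᶜ.indicator (nE v t) x := fun n => by
      rw [lintegral_indicator measurableSet_Icc.compl]
    simp only [h1]
    have h := tendsto_lintegral_of_dominated_convergence (μ := volume)
      (F := fun (n : ℕ) x => (Icc (-(n:ℝ)) n)ᶜ.indicator (nE v t) x) (f := fun _ => 0) (nE v t)
      (fun n => hmt.indicator measurableSet_Icc.compl)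
      (fun n => Eventually.of_forall fun x => indicator_le_self _ _ _)
      ((hK t).trans_lt hKt.lt_top).ne (Eventually.of_forall fun x => ?_)
    · simpa using h
    · apply tendsto_const_nhds.congr'
      obtain ⟨N, hN⟩ := exists_nat_ge |x|
      filter_upwards [eventually_ge_atTop N] with n hn
      have : (N:ℝ) ≤ n := by exact_mod_cast hn
      rw [indicator_of_notMem]
      simp only [mem_compl_iff, not_not]
      exact abs_le.1 (hN.trans this)

lemma err_small {v g : ℝ → ℝ → ℂ} (hv : Continuous (Function.uncurry v))
    (hg : Continuous (Function.uncurry g)) {C : ℝ} (hC0 : 0 ≤ C) (hC : ∀ t x, ‖g t x‖ ≤ C * ‖v t x‖)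
    (him : ∀ t x, jm (v t x) (g t x) = 0) {K : ENNReal} (hKt : K ≠ ⊤)
    (hK : ∀ t, ∫⁻ x, nE v t x ≤ K) (a b : ℝ) {η : ENNReal} (hη : 0 < η) (hηt : η ≠ ⊤) :
    ∀ᶠ ε in nhdsWithin (0:ℝ) (Ioi 0), ∫⁻ t in Icc a b, ∫⁻ x,
      ENNReal.ofReal (|jm (stk ε v t x) (stk ε g t x)| * Real.exp (2 * x)) ≤ η := by
  have hη2 : 0 < η / 2 := ENNReal.half_pos hη.ne'
  -- choose the tail
  have ht := (ENNReal.Tendsto.const_mul (a := ENNReal.ofReal C)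
    (tail_tendsto hv hKt hK a (b+1)) (Or.inr ENNReal.ofReal_ne_top))
  rw [mul_zero] at ht
  obtain ⟨n, hn⟩ := (ht.eventually (gt_mem_nhds hη2)).exists
  set S : Set ℝ := Icc (-(n:ℝ)) n with hS
  have hSm : MeasurableSet S := measurableSet_Icc
  have cJ : Continuous fun p : ℝ × (ℝ × ℝ) => jm (stk p.1 v p.2.1 p.2.2) (stk p.1 g p.2.1 p.2.2) :=
    cont_jm (stk_cont3 hv) (stk_cont3 hg)
  have cJe : ∀ ε, Continuous fun p : ℝ × ℝ => ENNReal.ofReal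
      (|jm (stk ε v p.1 p.2) (stk ε g p.1 p.2)| * Real.exp (2 * p.2)) := fun ε =>
    ENNReal.continuous_ofReal.comp
      (((cJ.comp (by fun_prop : Continuous fun p : ℝ × ℝ => (ε, p))).abs).mul (by fun_prop))
  -- small on compact
  obtain ⟨δ, hδ0, hδ⟩ : ∃ δ : ℝ, 0 < δ ∧
      ∫⁻ t in Icc a b, ∫⁻ x in S, ENNReal.ofReal (δ * Real.exp (2 * n)) ≤ η / 2 := by
    have hlim : Tendsto (fun δ : ℝ => ENNReal.ofReal (δ * Real.exp (2 * n)) * volume S * volume (Icc a b))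
        (nhdsWithin 0 (Ioi 0)) (nhds 0) := by
      have : Tendsto (fun δ : ℝ => ENNReal.ofReal (δ * Real.exp (2 * n))) (nhdsWithin 0 (Ioi 0)) (nhds 0) := by
        have : Continuous (fun δ : ℝ => ENNReal.ofReal (δ * Real.exp (2 * n))) :=
          ENNReal.continuous_ofReal.comp (by fun_prop)
        have h := this.tendsto 0
        simp only [zero_mul, ENNReal.ofReal_zero] at h
        exact h.mono_left nhdsWithin_le_nhds
      have h := ENNReal.Tendsto.mul_const (b := volume (Icc a b))
        (ENNReal.Tendsto.mul_const (b := volume S) this (Or.inr (by simp [hS]))) (Or.inr (by simp))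
      simpa using h
    obtain ⟨δ, hδ, hδ'⟩ := ((hlim.eventually (gt_mem_nhds hη2)).and self_mem_nhdsWithin).exists
    refine ⟨δ, hδ', ?_⟩
    simp only [lintegral_const, Measure.restrict_apply_univ]
    exact hδ.le
  have hev : ∀ᶠ ε in nhds (0:ℝ), ∀ p ∈ (Icc a b ×ˢ S : Set (ℝ × ℝ)),
      |jm (stk ε v p.1 p.2) (stk ε g p.1 p.2)| < δ := by
    apply (isCompact_Icc.prod isCompact_Icc).eventually_forall_of_forall_eventually
    intro p _
    have := cJ.abs.tendsto ((0:ℝ), p)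
    simp only [stk_zero, him, abs_zero] at this
    exact this.eventually (gt_mem_nhds hδ0)
  filter_upwards [nhdsWithin_le_nhds hev, self_mem_nhdsWithin,
    nhdsWithin_le_nhds (Iic_mem_nhds (zero_lt_one (α := ℝ)))] with ε h1 h2 h3
  have h2 : 0 < ε := h2
  have h3 : ε ≤ 1 := h3
  have hsplit : ∀ t, ∫⁻ x, ENNReal.ofReal (|jm (stk ε v t x) (stk ε g t x)| * Real.exp (2 * x)) =
      (∫⁻ x in S, ENNReal.ofReal (|jm (stk ε v t x) (stk ε g t x)| * Real.exp (2 * x))) +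
      ∫⁻ x in Sᶜ, ENNReal.ofReal (|jm (stk ε v t x) (stk ε g t x)| * Real.exp (2 * x)) :=
    fun t => (lintegral_add_compl _ hSm).symm
  simp only [hsplit]
  rw [lintegral_add_left (cJe ε).measurable.lintegral_prod_right', ← ENNReal.add_halves η]
  apply add_le_add
  · refine le_trans ?_ hδ
    apply setLIntegral_mono' measurableSet_Icc
    intro t ht
    apply setLIntegral_mono' hSm
    intro x hx
    apply ENNReal.ofReal_le_ofReal
    have := h1 (t, x) ⟨ht, hx⟩
    gcongr
    exact hx.2
  · refine le_trans ?_ hn.le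
    calc _ ≤ ∫⁻ t in Icc a b, ∫⁻ x in Sᶜ, ENNReal.ofReal C * ∫⁻ s in Ioc (0:ℝ) 1, nE v (t + ε * s) x := by
          gcongr with t x
          exact err_ptw hv hg hC0 hC ε t x
      _ = ∫⁻ t in Icc a b, ∫⁻ s in Ioc (0:ℝ) 1, ENNReal.ofReal C * ∫⁻ x in Sᶜ, nE v (t + ε * s) x := by
          congr 1; funext t
          rw [lintegral_const_mul' _ _ ENNReal.ofReal_ne_top, lintegral_const_mul' _ _ ENNReal.ofReal_ne_top,
            lintegral_lintegral_swap]
          exact ((nE_cont hv).comp (by fun_prop : Continuous fun q : ℝ × ℝ =>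
            (t + ε * q.2, q.1))).measurable.aemeasurable
      _ = ∫⁻ s in Ioc (0:ℝ) 1, ∫⁻ t in Icc a b, ENNReal.ofReal C * ∫⁻ x in Sᶜ, nE v (t + ε * s) x := by
          apply lintegral_lintegral_swap
          apply Measurable.aemeasurable
          apply Measurable.const_mul
          have : Measurable fun t => ∫⁻ x in Sᶜ, nE v t x :=
            ((nE_cont hv).measurable).lintegral_prod_right'
          exact this.comp (by fun_prop : Measurable fun q : ℝ × ℝ => q.1 + ε * q.2)
      _ ≤ ∫⁻ s in Ioc (0:ℝ) 1, ENNReal.ofReal C * ∫⁻ t in Icc a (b+1), ∫⁻ x in Sᶜ, nE v t x := by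
          apply setLIntegral_mono' measurableSet_Ioc
          intro s hs
          rw [lintegral_const_mul' _ _ ENNReal.ofReal_ne_top]
          refine mul_le_mul' le_rfl ?_
          exact shift_le (F := fun t => ∫⁻ x in Sᶜ, nE v t x) (by have := hs.1; positivity)
            (mul_le_one₀ h3 hs.1.le hs.2)
      _ = _ := by simp

end


noncomputable section

lemma real_le_of_nE {f : ℝ → ℂ} (hf : Continuous f) {K : ℝ} (hK0 : 0 ≤ K)
    (hK : ∫⁻ x, ENNReal.ofReal (‖f x‖ ^ 2 * Real.exp (2 * x)) ≤ ENNReal.ofReal K) {L : ℝ} (hL : 0 ≤ L) :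
    ∫ x in (-L)..L, ‖f x‖ ^ 2 * Real.exp (2 * x) ≤ K := by
  rw [← ENNReal.ofReal_le_ofReal_iff hK0, ofReal_int (by fun_prop) (fun _ => by positivity) (by linarith)]
  exact (setLIntegral_le_lintegral _ _).trans hK

set_option maxHeartbeats 1000000 in
lemma dyn_est {s T T1 k C M K : ℝ} {K1 : ENNReal} (hsT : s ≤ T)
    {v v1 v2 vt g : ℝ → ℝ → ℂ}
    (cv : Continuous (Function.uncurry v)) (cv1 : Continuous (Function.uncurry v1))
    (cv2 : Continuous (Function.uncurry v2)) (cvt : Continuous (Function.uncurry vt))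
    (cg : Continuous (Function.uncurry g))
    (hv1 : ∀ t x, HasDerivAt (v t) (v1 t x) x) (hv2 : ∀ t x, HasDerivAt (v1 t) (v2 t x) x)
    (hvt : ∀ t ∈ Icc s T1, ∀ t' ∈ Icc s T1, ∀ x, ∫ τ in t..t', vt τ x = v t' x - v t x)
    (heq : ∀ t x, (Real.exp (2 * x) : ℂ) * (Complex.I * vt t x - g t x)
      = - v2 t x + (k ^ 2 : ℝ) * v t x)
    (hC0 : 0 ≤ C) (hg : ∀ t x, ‖g t x‖ ≤ C * ‖v t x‖)
    (hM : ∀ t, ∀ x ≤ 0, ‖v t x‖ ≤ M) (hK0 : 0 ≤ K)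
    (hK : ∀ t, ∫⁻ x, nE v t x ≤ ENNReal.ofReal K)
    {ε : ℝ} (hε : 0 < ε) (hεT : T + ε ≤ T1)
    (hK1 : ∀ t ∈ Icc s (s + ε), ∫⁻ x, nE v t x ≤ K1) :
    ∃ A : ℝ, ∀ L : ℝ, 1 ≤ L →
      ENNReal.ofReal (∫ x in (-L)..L, (1 - (x / L) ^ 2) ^ 2 * ‖stk ε v T x‖ ^ 2 * Real.exp (2 * x))
      ≤ K1 + (ENNReal.ofReal (A / Real.sqrt L) + 2 * ∫⁻ t in Icc s T, ∫⁻ x,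
      ENNReal.ofReal (|jm (stk ε v t x) (stk ε g t x)| * Real.exp (2 * x))) := by
  set z := stk ε v with hz
  set gε := stk ε g with hgε
  set zt : ℝ → ℝ → ℂ := fun t x => (ε⁻¹ : ℝ) • (v (t + ε) x - v t x) with hzt
  have cz : Continuous (Function.uncurry z) := stk_cont cv ε
  have cgε : Continuous (Function.uncurry gε) := stk_cont cg ε
  have czt : Continuous (Function.uncurry zt) := by
    have h1 : Continuous fun p : ℝ × ℝ => v (p.1 + ε) p.2 :=
      cv.comp (by fun_prop : Continuous fun p : ℝ × ℝ => (p.1 + ε, p.2))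
    have h2 : Continuous fun p : ℝ × ℝ => v p.1 p.2 := cv
    exact (h1.sub h2).const_smul (ε⁻¹ : ℝ)
  set P : ℝ → ℝ → ℂ := fun t x => Complex.I * zt t x - gε t x with hP
  have cP : Continuous (Function.uncurry P) := (continuous_const.mul czt).sub cgε
  -- the equation for z
  have hPeq : ∀ t ∈ Icc s T, ∀ x, (Real.exp (2 * x) : ℂ) * P t x
      = - stk ε v2 t x + (k ^ 2 : ℝ) * z t x := by
    intro t ht x
    have h1 : zt t x = stk ε vt t x := by
      rw [stk_eq hε.ne', hvt t ⟨ht.1, by linarith [ht.2]⟩ (t + ε)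
        ⟨by linarith [ht.1], by linarith [ht.2]⟩]
    simp only [hP, h1, hz, hgε, stk]
    have ii : ∀ {f : ℝ → ℝ → ℂ}, Continuous (Function.uncurry f) →
        IntervalIntegrable (fun σ => f (t + ε * σ) x) volume 0 1 := fun {f} hf =>
      ((sec_t hf x).comp (by fun_prop : Continuous fun σ : ℝ => t + ε * σ)).intervalIntegrable _ _
    have iv2 : IntervalIntegrable (fun σ => - v2 (t + ε * σ) x) volume 0 1 := (ii cv2).neg
    rw [← intervalIntegral.integral_const_mul, ← intervalIntegral.integral_const_mul,
      ← intervalIntegral.integral_sub ((ii cvt).const_mul _) (ii cg), ← intervalIntegral.integral_neg,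
      ← intervalIntegral.integral_add iv2 ((ii cv).const_mul _),
      ← intervalIntegral.integral_const_mul]
    congr 1; funext σ
    exact heq _ _
  have hzM : ∀ t, ∀ x ≤ 0, ‖z t x‖ ≤ M := by
    intro t x hx
    have := intervalIntegral.norm_integral_le_of_norm_le_const (a := 0) (b := 1)
      (f := fun σ => v (t + ε * σ) x) (C := M) (fun σ _ => hM _ x hx)
    show ‖∫ σ in (0:ℝ)..1, v (t+ε*σ) x‖ ≤ M
    simpa using this
  have hzK : ∀ t, ∫⁻ x, nE z t x ≤ ENNReal.ofReal K := fun t => mass_stk cv fun σ _ => hK _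
  have hgK : ∀ t, ∫⁻ x, nE gε t x ≤ ENNReal.ofReal (C ^ 2 * K) := fun t => mass_stk cg fun σ _ => by
    rw [ENNReal.ofReal_mul (by positivity)]
    calc _ ≤ ∫⁻ x, ENNReal.ofReal (C ^ 2) * nE v (t + ε * σ) x := by
          apply lintegral_mono
          intro x
          simp only [nE]
          rw [← ENNReal.ofReal_mul (by positivity), ← mul_assoc, ← mul_pow]
          apply ENNReal.ofReal_le_ofReal
          have := hg (t + ε * σ) x
          gcongr
      _ ≤ _ := by
          rw [lintegral_const_mul' _ _ ENNReal.ofReal_ne_top]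
          exact mul_le_mul' le_rfl (hK _)
  set B : ℝ := 4 * (ε⁻¹) ^ 2 * (K + K) + 2 * (C ^ 2 * K) with hB
  have hPB : ∀ t L, 0 ≤ L → ∫ x in (-L)..L, ‖P t x‖ ^ 2 * Real.exp (2 * x) ≤ B := by
    intro t L hL
    have a1 := real_le_of_nE (sec_x cv (t + ε)) hK0 (hK (t + ε)) hL
    have a2 := real_le_of_nE (sec_x cv t) hK0 (hK t) hL
    have a3 := real_le_of_nE (sec_x cgε t) (by positivity) (hgK t) hL
    have b1 := sec_x cv (t + ε)
    have b2 := sec_x cv t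
    have b3 := sec_x cgε t
    have b4 := sec_x cP t
    have ii : ∀ {f : ℝ → ℝ}, Continuous f → IntervalIntegrable f volume (-L) L :=
      fun h => h.intervalIntegrable _ _
    calc _ ≤ ∫ x in (-L)..L, (4 * (ε⁻¹) ^ 2 * (‖v (t+ε) x‖ ^ 2 * Real.exp (2 * x) +
          ‖v t x‖ ^ 2 * Real.exp (2 * x)) + 2 * (‖gε t x‖ ^ 2 * Real.exp (2 * x))) := by
          apply intervalIntegral.integral_mono_on (by linarith) (ii (by fun_prop)) (ii (by fun_prop))
          intro x _
          have h1 : ‖P t x‖ ≤ ε⁻¹ * (‖v (t+ε) x‖ + ‖v t x‖) + ‖gε t x‖ := by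
            simp only [hP, hzt]
            refine (norm_sub_le _ _).trans ?_
            rw [norm_mul, Complex.norm_I, one_mul, norm_smul, Real.norm_of_nonneg (by positivity)]
            gcongr
            exact norm_sub_le _ _
          have h2 : ‖P t x‖ ^ 2 ≤ 4 * (ε⁻¹) ^ 2 * (‖v (t+ε) x‖ ^ 2 + ‖v t x‖ ^ 2) + 2 * ‖gε t x‖ ^ 2 := by
            refine (pow_le_pow_left₀ (norm_nonneg _) h1 2).trans ?_
            set a := ‖v (t+ε) x‖
            set b := ‖v t x‖
            set c := ‖gε t x‖
            nlinarith [sq_nonneg (ε⁻¹ * (a + b) - c), mul_nonneg (sq_nonneg ε⁻¹) (sq_nonneg (a - b))]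
          calc _ ≤ (4 * (ε⁻¹) ^ 2 * (‖v (t+ε) x‖ ^ 2 + ‖v t x‖ ^ 2) + 2 * ‖gε t x‖ ^ 2) *
              Real.exp (2 * x) := by gcongr
            _ = _ := by ring
      _ ≤ B := by
          rw [intervalIntegral.integral_add (ii (by fun_prop)) (ii (by fun_prop)),
            intervalIntegral.integral_const_mul, intervalIntegral.integral_const_mul,
            intervalIntegral.integral_add (ii (by fun_prop)) (ii (by fun_prop))]
          exact add_le_add (mul_le_mul_of_nonneg_left (add_le_add a1 a2) (by positivity))
            (mul_le_mul_of_nonneg_left a3 (by norm_num))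
  refine ⟨2 * (T - s) * (K + B + 40 * (M ^ 2 + K)), fun L hL => ?_⟩
  have hL0 : 0 < L := by linarith
  set χ : ℝ → ℝ := fun x => 1 - (x / L) ^ 2 with hχ
  have cχ : Continuous χ := by fun_prop
  have hχ01 : ∀ x ∈ Set.Icc (-L) L, χ x ^ 2 ≤ 1 := by
    intro x hx
    have : (x / L) ^ 2 ≤ 1 := by
      rw [div_pow, div_le_one (by positivity)]; nlinarith [hx.1, hx.2]
    have h0 : 0 ≤ (x / L) ^ 2 := by positivity
    simp only [hχ]; nlinarith
  set Y : ℝ → ℝ := fun t => ∫ x in (-L)..L, χ x ^ 2 * ‖z t x‖ ^ 2 * Real.exp (2 * x) with hY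
  set Y1 : ℝ → ℝ := fun t => ∫ x in (-L)..L, χ x ^ 2 * jm (z t x) (P t x) * Real.exp (2 * x) with hY1
  set Y2 : ℝ → ℝ := fun t => ∫ x in (-L)..L, χ x ^ 2 * jm (z t x) (gε t x) * Real.exp (2 * x) with hY2
  have cz' : Continuous fun p : ℝ × ℝ => z p.1 p.2 := cz
  have cP' : Continuous fun p : ℝ × ℝ => P p.1 p.2 := cP
  have czt' : Continuous fun p : ℝ × ℝ => zt p.1 p.2 := czt
  have cg' : Continuous fun p : ℝ × ℝ => gε p.1 p.2 := cgε
  have cY1 : Continuous Y1 := by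
    apply intervalIntegral.continuous_parametric_intervalIntegral_of_continuous'
    show Continuous fun p : ℝ × ℝ => χ p.2 ^ 2 * jm (z p.1 p.2) (P p.1 p.2) * Real.exp (2 * p.2)
    fun_prop
  have cY2 : Continuous Y2 := by
    apply intervalIntegral.continuous_parametric_intervalIntegral_of_continuous'
    show Continuous fun p : ℝ × ℝ => χ p.2 ^ 2 * jm (z p.1 p.2) (gε p.1 p.2) * Real.exp (2 * p.2)
    fun_prop
  have hYd : ∀ t, HasDerivAt Y (2 * Y1 t + 2 * Y2 t) t := by
    intro t
    have h := pid (F := fun t x => χ x ^ 2 * ‖z t x‖ ^ 2 * Real.exp (2 * x))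
      (F' := fun t x => χ x ^ 2 * (2 * jr (z t x) (zt t x)) * Real.exp (2 * x)) ?_ ?_ ?_ (-L) L t
    · refine h.congr_deriv ?_
      have b2 := sec_x cz t
      have b3 := sec_x cgε t
      have b4 := sec_x cP t
      simp only [hY1, hY2]
      rw [← intervalIntegral.integral_const_mul, ← intervalIntegral.integral_const_mul,
        ← intervalIntegral.integral_add ((by fun_prop : Continuous _).intervalIntegrable _ _)
          ((by fun_prop : Continuous _).intervalIntegrable _ _)]
      congr 1; funext x
      simp only [hP, jr, jm, Complex.sub_im, Complex.sub_re, Complex.I_mul_re, Complex.I_mul_im]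
      ring
    · show Continuous fun p : ℝ × ℝ => χ p.2 ^ 2 * ‖z p.1 p.2‖ ^ 2 * Real.exp (2 * p.2)
      fun_prop
    · show Continuous fun p : ℝ × ℝ => χ p.2 ^ 2 * (2 * jr (z p.1 p.2) (zt p.1 p.2)) * Real.exp (2 * p.2)
      fun_prop
    · intro t x
      exact ((hda_nsq (stk_dt cv hε.ne' t x)).const_mul _).mul_const _
  have hFTC : Y T = Y s + ((∫ t in s..T, 2 * Y1 t) + ∫ t in s..T, 2 * Y2 t) := by
    have h := intervalIntegral.integral_eq_sub_of_hasDerivAt (a := s) (b := T) (fun t _ => hYd t)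
      ((by fun_prop : Continuous _).intervalIntegrable _ _)
    rw [intervalIntegral.integral_add ((by fun_prop : Continuous _).intervalIntegrable _ _)
          ((by fun_prop : Continuous _).intervalIntegrable _ _)] at h
    linarith
  have e1 : ∫ t in s..T, 2 * Y1 t ≤ 2 * (T - s) * (K + B + 40 * (M ^ 2 + K)) / Real.sqrt L := by
    have := intervalIntegral.norm_integral_le_of_norm_le_const (a := s) (b := T)
      (f := fun t => 2 * Y1 t) (C := 2 * ((K + B + 40 * (M ^ 2 + K)) / Real.sqrt L)) ?_
    · rw [abs_of_nonneg (by linarith)] at this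
      refine (le_abs_self _).trans (this.trans (le_of_eq ?_))
      ring
    · intro t ht
      rw [uIoc_of_le hsT] at ht
      rw [norm_mul, Real.norm_two, Real.norm_eq_abs]
      gcongr
      exact flux_est hL (stk_dx cv cv1 hv1 ε t) (stk_dx cv1 cv2 hv2 ε t)
        (sec_x (stk_cont cv2 ε) t) (sec_x cP t) (hPeq t ⟨ht.1.le, ht.2⟩) (hzM t)
        (real_le_of_nE (sec_x cz t) hK0 (hzK t) hL0.le) (hPB t L hL0.le)
  have hYs : ENNReal.ofReal (Y s) ≤ K1 := by
    have b2 := sec_x cz s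
    simp only [hY]
    rw [ofReal_int (by fun_prop) (fun _ => by positivity) (by linarith)]
    refine le_trans ?_ (mass_stk (K := K1) cv (ε := ε) (t := s) fun σ hσ => hK1 _
      ⟨by have := hσ.1; nlinarith, by nlinarith [hσ.2]⟩)
    refine le_trans ?_ (setLIntegral_le_lintegral (Ioc (-L) L) _)
    apply setLIntegral_mono' measurableSet_Ioc
    intro x hx
    apply ENNReal.ofReal_le_ofReal
    have := hχ01 x ⟨hx.1.le, hx.2⟩
    have : χ x ^ 2 * ‖z s x‖ ^ 2 ≤ ‖z s x‖ ^ 2 := by nlinarith [sq_nonneg ‖z s x‖]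
    gcongr
  have e2 : ENNReal.ofReal (∫ t in s..T, 2 * Y2 t) ≤ 2 * ∫⁻ t in Icc s T, ∫⁻ x,
      ENNReal.ofReal (|jm (z t x) (gε t x)| * Real.exp (2 * x)) := by
    have c0 : ∫ t in s..T, 2 * Y2 t ≤ ∫ t in s..T, 2 * |Y2 t| := by
      apply intervalIntegral.integral_mono_on hsT ((by fun_prop : Continuous _).intervalIntegrable _ _)
          ((by fun_prop : Continuous _).intervalIntegrable _ _)
      intro t _
      have := le_abs_self (Y2 t)
      linarith
    refine (ENNReal.ofReal_le_ofReal c0).trans ?_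
    rw [ofReal_int (by fun_prop) (fun _ => by positivity) hsT, ← lintegral_const_mul' _ _ (by simp)]
    refine le_trans ?_ (lintegral_mono_set Ioc_subset_Icc_self)
    apply lintegral_mono
    intro t
    simp only
    rw [ENNReal.ofReal_mul (by norm_num), ENNReal.ofReal_ofNat]
    refine mul_le_mul' le_rfl ?_
    have b2 := sec_x cz t
    have b3 := sec_x cgε t
    have d0 : |Y2 t| ≤ ∫ x in (-L)..L, |jm (z t x) (gε t x)| * Real.exp (2 * x) := by
      rw [← Real.norm_eq_abs]
      apply intervalIntegral.norm_integral_le_of_norm_le (by linarith) _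
        ((by fun_prop : Continuous _).intervalIntegrable _ _)
      refine Eventually.of_forall fun x hx => ?_
      rw [norm_mul, norm_mul, Real.norm_of_nonneg (Real.exp_pos _).le,
        Real.norm_of_nonneg (sq_nonneg (χ x)), Real.norm_eq_abs]
      have := hχ01 x ⟨hx.1.le, hx.2⟩
      have : χ x ^ 2 * |jm (z t x) (gε t x)| ≤ |jm (z t x) (gε t x)| := by
        nlinarith [abs_nonneg (jm (z t x) (gε t x))]
      gcongr
    refine (ENNReal.ofReal_le_ofReal d0).trans ?_
    rw [ofReal_int (by fun_prop) (fun _ => by positivity) (by linarith)]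
    exact setLIntegral_le_lintegral _ _
  show ENNReal.ofReal (Y T) ≤ _
  rw [hFTC]
  refine ENNReal.ofReal_add_le.trans (add_le_add hYs (ENNReal.ofReal_add_le.trans (add_le_add ?_ e2)))
  exact ENNReal.ofReal_le_ofReal e1

theorem energy_abs {s T T1 k C M K s1 : ℝ} {K1 : ENNReal} (hsT : s ≤ T) (hT1 : T < T1) (hs1 : s < s1)
    {v v1 v2 vt g : ℝ → ℝ → ℂ}
    (cv : Continuous (Function.uncurry v)) (cv1 : Continuous (Function.uncurry v1))
    (cv2 : Continuous (Function.uncurry v2)) (cvt : Continuous (Function.uncurry vt))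
    (cg : Continuous (Function.uncurry g))
    (hv1 : ∀ t x, HasDerivAt (v t) (v1 t x) x) (hv2 : ∀ t x, HasDerivAt (v1 t) (v2 t x) x)
    (hvt : ∀ t ∈ Icc s T1, ∀ t' ∈ Icc s T1, ∀ x, ∫ τ in t..t', vt τ x = v t' x - v t x)
    (heq : ∀ t x, (Real.exp (2 * x) : ℂ) * (Complex.I * vt t x - g t x)
      = - v2 t x + (k ^ 2 : ℝ) * v t x)
    (hC0 : 0 ≤ C) (hg : ∀ t x, ‖g t x‖ ≤ C * ‖v t x‖) (him : ∀ t x, jm (v t x) (g t x) = 0)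
    (hM : ∀ t, ∀ x ≤ 0, ‖v t x‖ ≤ M) (hK0 : 0 ≤ K)
    (hK : ∀ t, ∫⁻ x, nE v t x ≤ ENNReal.ofReal K)
    (hK1 : ∀ t ∈ Icc s s1, ∫⁻ x, nE v t x ≤ K1) :
    ∫⁻ x, nE v T x ≤ K1 := by
  have step : ∀ n : ℕ, ∃ ε L : ℝ, 0 < ε ∧ ε ≤ 1 / ((n:ℝ) + 1) ∧ (n:ℝ) + 1 ≤ L ∧
      ENNReal.ofReal (∫ x in (-L)..L, (1 - (x / L) ^ 2) ^ 2 * ‖stk ε v T x‖ ^ 2 * Real.exp (2 * x))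
      ≤ K1 + ENNReal.ofReal (3 / ((n:ℝ) + 1)) := by
    intro n
    have hn : (0:ℝ) < 1 / ((n:ℝ) + 1) := by positivity
    have h1 := err_small cv cg hC0 hg him ENNReal.ofReal_ne_top hK s T
      (η := ENNReal.ofReal (1 / ((n:ℝ) + 1))) (by simpa using hn) ENNReal.ofReal_ne_top
    have h2 : ∀ᶠ ε in nhdsWithin (0:ℝ) (Ioi 0), ε ≤ min (1 / ((n:ℝ) + 1)) (min (T1 - T) (s1 - s)) := by
      apply nhdsWithin_le_nhds
      exact Iic_mem_nhds (lt_min hn (lt_min (by linarith) (by linarith)))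
    obtain ⟨ε, ⟨e1, e2⟩, e3⟩ := ((h1.and h2).and self_mem_nhdsWithin).exists
    have e3 : 0 < ε := e3
    simp only [le_min_iff] at e2
    obtain ⟨A, hA⟩ := dyn_est hsT cv cv1 cv2 cvt cg hv1 hv2 hvt heq hC0 hg hM hK0 hK e3
      (by linarith) (fun t ht => hK1 t ⟨ht.1, by linarith [ht.2]⟩)
    have h4 : Tendsto (fun L : ℝ => A / Real.sqrt L) atTop (nhds 0) :=
      tendsto_const_nhds.div_atTop Real.tendsto_sqrt_atTop
    obtain ⟨L, hL1, hL2⟩ := ((h4.eventually (gt_mem_nhds hn)).and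
      (eventually_ge_atTop ((n:ℝ) + 1))).exists
    refine ⟨ε, L, e3, e2.1, hL2, ?_⟩
    refine (hA L (by have : (0:ℝ) ≤ n := by positivity
                     linarith)).trans ?_
    refine add_le_add le_rfl ?_
    have : (3:ℝ) / ((n:ℝ) + 1) = 1 / ((n:ℝ) + 1) + 2 * (1 / ((n:ℝ) + 1)) := by ring
    rw [this, ENNReal.ofReal_add (by positivity) (by positivity), ENNReal.ofReal_mul (by norm_num),
      ENNReal.ofReal_ofNat]
    exact add_le_add (ENNReal.ofReal_le_ofReal hL1.le) (mul_le_mul' le_rfl e1)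
  choose ε L hε hεn hLn hb using step
  set F : ℕ → ℝ → ENNReal := fun n => (Ioc (-(L n)) (L n)).indicator fun x =>
    ENNReal.ofReal ((1 - (x / L n) ^ 2) ^ 2 * ‖stk (ε n) v T x‖ ^ 2 * Real.exp (2 * x)) with hF
  have hLpos : ∀ n, 0 < L n := fun n => lt_of_lt_of_le (by positivity) (hLn n)
  have cont : ∀ n, Continuous fun x => (1 - (x / L n) ^ 2) ^ 2 * ‖stk (ε n) v T x‖ ^ 2 * Real.exp (2 * x) := by
    intro n
    have := sec_x (stk_cont cv (ε n)) T
    fun_prop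
  have hFm : ∀ n, Measurable (F n) := fun n =>
    (ENNReal.continuous_ofReal.comp (cont n)).measurable.indicator measurableSet_Ioc
  have hFi : ∀ n, ∫⁻ x, F n x ≤ K1 + ENNReal.ofReal (3 / ((n:ℝ) + 1)) := by
    intro n
    refine le_trans (le_of_eq ?_) (hb n)
    rw [ofReal_int (cont n) (fun _ => by positivity) (by linarith [hLpos n]), ← lintegral_indicator measurableSet_Ioc]
  have hlimn : Tendsto (fun n : ℕ => 1 / ((n:ℝ) + 1)) atTop (nhds 0) :=
    tendsto_one_div_add_atTop_nhds_zero_nat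
  have hε0 : Tendsto ε atTop (nhds 0) := squeeze_zero (fun n => (hε n).le) hεn hlimn
  have hLt : Tendsto L atTop atTop := by
    apply tendsto_atTop_mono hLn
    exact tendsto_atTop_add_const_right _ _ tendsto_natCast_atTop_atTop
  have hFl : ∀ x, Tendsto (fun n => F n x) atTop (nhds (nE v T x)) := by
    intro x
    have h1 : Tendsto (fun n => ENNReal.ofReal ((1 - (x / L n) ^ 2) ^ 2 * ‖stk (ε n) v T x‖ ^ 2 * Real.exp (2 * x)))
      atTop (nhds (nE v T x)) := by
      apply (ENNReal.continuous_ofReal.tendsto _).comp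
      have a1 : Tendsto (fun n => x / L n) atTop (nhds 0) := tendsto_const_nhds.div_atTop hLt
      have a2 : Tendsto (fun n => stk (ε n) v T x) atTop (nhds (v T x)) := by
        have c : Continuous fun e => stk e v T x :=
          (stk_cont3 cv).comp (by fun_prop : Continuous fun e : ℝ => (e, (T, x)))
        have := (c.tendsto 0).comp hε0
        rwa [stk_zero] at this
      have := (((a1.pow 2).const_sub 1).pow 2).mul (a2.norm.pow 2) |>.mul_const (Real.exp (2 * x))
      simpa using this
    refine h1.congr' ?_
    filter_upwards [hLt.eventually_gt_atTop |x|] with n hn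
    simp only [hF]
    rw [indicator_of_mem]
    exact ⟨(abs_lt.1 hn).1, (abs_lt.1 hn).2.le⟩
  calc ∫⁻ x, nE v T x = ∫⁻ x, liminf (fun n => F n x) atTop := by
        congr 1; funext x; exact (hFl x).liminf_eq.symm
    _ ≤ liminf (fun n => ∫⁻ x, F n x) atTop := lintegral_liminf_le hFm
    _ ≤ liminf (fun n : ℕ => K1 + ENNReal.ofReal (3 / ((n:ℝ) + 1))) atTop :=
        liminf_le_liminf (Eventually.of_forall hFi)
    _ = K1 := by
        apply Tendsto.liminf_eq
        have : Tendsto (fun n : ℕ => ENNReal.ofReal (3 / ((n:ℝ) + 1))) atTop (nhds 0) := by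
          have h := (ENNReal.continuous_ofReal.tendsto _).comp (hlimn.const_mul 3)
          simp only [mul_zero, ENNReal.ofReal_zero] at h
          refine h.congr fun n => ?_
          simp only [Function.comp]; congr 1; ring
        simpa using tendsto_const_nhds.add this

end


noncomputable section

def wf (m : ℕ) (f : ℝ → ℂ) (r : ℝ) : ℝ := (m:ℝ) + Atheta f r
def vf (m : ℕ) (f f1 : ℝ → ℂ) (r : ℝ) : ℂ := f1 r - ((wf m f r / r : ℝ) : ℂ) * f r

lemma hda_wf (m : ℕ) {f : ℝ → ℂ} (hf : Continuous f) (r : ℝ) :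
    HasDerivAt (wf m f) (-(1/2) * (‖f r‖ ^ 2 * r)) r := by
  have h : Continuous fun s => ‖f s‖ ^ 2 * s := by fun_prop
  have := intervalIntegral.integral_hasDerivAt_right (h.intervalIntegrable 0 r)
    (h.stronglyMeasurableAtFilter _ _) h.continuousAt
  exact (this.const_mul (-(1/2))).const_add (m:ℝ)

lemma wf_zero (m : ℕ) (f : ℝ → ℂ) : wf m f 0 = m := by simp [wf, Atheta]

lemma cont_wf (m : ℕ) {f : ℝ → ℂ} (hf : Continuous f) : Continuous (wf m f) :=
  continuous_iff_continuousAt.2 fun r => (hda_wf m hf r).continuousAt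

lemma wf_anti (m : ℕ) {f : ℝ → ℂ} (hf : Continuous f) : AntitoneOn (wf m f) (Ici 0) := by
  apply antitoneOn_of_deriv_nonpos (convex_Ici 0) (cont_wf m hf).continuousOn
  · intro x _; exact (hda_wf m hf x).differentiableAt.differentiableWithinAt
  · intro x hx
    rw [interior_Ici] at hx
    rw [(hda_wf m hf x).deriv]
    have : 0 ≤ ‖f x‖ ^ 2 * x := mul_nonneg (by positivity) (le_of_lt hx)
    linarith

lemma wf_le (m : ℕ) {f : ℝ → ℂ} (hf : Continuous f) {r : ℝ} (hr : 0 ≤ r) : wf m f r ≤ m := by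
  rw [← wf_zero m f]; exact wf_anti m hf (self_mem_Ici) hr hr

lemma wf_eq (m : ℕ) {f : ℝ → ℂ} (hi : IntegrableOn (fun r => ‖f r‖ ^ 2 * r) (Ioi 0))
    (hM : ∫ r in Ioi 0, ‖f r‖ ^ 2 * r = 4 * (m + 1)) {r : ℝ} (hr : 0 ≤ r) :
    wf m f r = - (m + 2) + (1/2) * ∫ s in Ioi r, ‖f s‖ ^ 2 * s := by
  have h1 : (∫ s in (0:ℝ)..r, ‖f s‖ ^ 2 * s) + ∫ s in Ioi r, ‖f s‖ ^ 2 * s = 4 * (m+1) := by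
    rw [← hM]
    exact intervalIntegral.integral_interval_add_Ioi hi (hi.mono_set (Ioi_subset_Ioi hr))
  rw [wf, Atheta]; linarith

lemma wf_ge (m : ℕ) {f : ℝ → ℂ} (hi : IntegrableOn (fun r => ‖f r‖ ^ 2 * r) (Ioi 0))
    (hM : ∫ r in Ioi 0, ‖f r‖ ^ 2 * r = 4 * (m + 1)) {r : ℝ} (hr : 0 ≤ r) :
    - ((m:ℝ) + 2) ≤ wf m f r := by
  rw [wf_eq m hi hM hr]
  have : 0 ≤ ∫ s in Ioi r, ‖f s‖ ^ 2 * s :=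
    setIntegral_nonneg measurableSet_Ioi fun s hs => mul_nonneg (by positivity) (hr.trans (le_of_lt hs))
  linarith

lemma wf_abs (m : ℕ) {f : ℝ → ℂ} (hf : Continuous f) (hi : IntegrableOn (fun r => ‖f r‖ ^ 2 * r) (Ioi 0))
    (hM : ∫ r in Ioi 0, ‖f r‖ ^ 2 * r = 4 * (m + 1)) {r : ℝ} (hr : 0 ≤ r) :
    |wf m f r| ≤ m + 2 := abs_le.2 ⟨wf_ge m hi hM hr, by linarith [wf_le m hf hr]⟩

lemma f1_eq (m : ℕ) (f f1 : ℝ → ℂ) (r : ℝ) : f1 r = vf m f f1 r + ((wf m f r / r : ℝ) : ℂ) * f r := by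
  simp [vf]

lemma jr_add_smul (a b : ℂ) (c : ℝ) : jr a (b + (c:ℂ) * a) = jr a b + c * ‖a‖ ^ 2 := by
  rw [nsq]; simp [jr]; ring

lemma jm_add_smul (a b : ℂ) (c : ℝ) : jm a (b + (c:ℂ) * a) = jm a b := by
  simp [jm]; ring

lemma jr_f1 (m : ℕ) (f f1 : ℝ → ℂ) (r : ℝ) :
    jr (f r) (f1 r) = jr (f r) (vf m f f1 r) + wf m f r / r * ‖f r‖ ^ 2 := by
  conv_lhs => rw [f1_eq m f f1 r]
  exact jr_add_smul _ _ _

/-- Pohozaev-type identity at fixed time. -/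
lemma poho (m : ℕ) {f f1 : ℝ → ℂ} (hf : ∀ r, HasDerivAt f (f1 r) r) (cf1 : Continuous f1)
    (hi : IntegrableOn (fun r => ‖f r‖ ^ 2 * r) (Ioi 0))
    (hM : ∫ r in Ioi 0, ‖f r‖ ^ 2 * r = 4 * (m + 1)) {KE : ℝ}
    (hvi : IntegrableOn (fun r => ‖vf m f f1 r‖ ^ 2 * r) (Ioi 0))
    (hvK : ∫ r in Ioi 0, ‖vf m f f1 r‖ ^ 2 * r ≤ KE) {r : ℝ} (hr : 0 ≤ r) :
    |(1/2) * r ^ 2 * ‖f r‖ ^ 2 + (1 + wf m f r) ^ 2 - (1 + m) ^ 2| ≤ r * ((4 * (m + 1) + KE) / 2) := by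
  have cf : Continuous f := continuous_iff_continuousAt.2 fun r => (hf r).continuousAt
  have cw := cont_wf m cf
  set e : ℝ → ℝ := fun s => s ^ 2 * jr (f s) (f1 s) - s * wf m f s * ‖f s‖ ^ 2 with he
  have ce : Continuous e := by fun_prop
  have hd : ∀ s, HasDerivAt (fun s => (1/2) * s ^ 2 * ‖f s‖ ^ 2 + (1 + wf m f s) ^ 2) (e s) s := by
    intro s
    have h1 := ((((hasDerivAt_id s).pow 2).const_mul (1/2)).mul (hda_nsq (hf s)))
    have h2 := ((hda_wf m cf s).const_add 1).pow 2
    refine (h1.add h2).congr_deriv ?_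
    simp [he]; ring
  have h0 := intervalIntegral.integral_eq_sub_of_hasDerivAt (a := 0) (b := r) (fun s _ => hd s)
    (ce.intervalIntegrable _ _)
  have h1 : (1/2) * r ^ 2 * ‖f r‖ ^ 2 + (1 + wf m f r) ^ 2 - (1 + m) ^ 2 = ∫ s in (0:ℝ)..r, e s := by
    rw [h0, wf_zero]; ring
  rw [h1]
  have iv : IntervalIntegrable (fun s => ‖vf m f f1 s‖ ^ 2 * s) volume 0 r :=
    (intervalIntegrable_iff_integrableOn_Ioc_of_le hr).2 (hvi.mono_set Ioc_subset_Ioi_self)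
  have iu : IntervalIntegrable (fun s => ‖f s‖ ^ 2 * s) volume 0 r :=
    (intervalIntegrable_iff_integrableOn_Ioc_of_le hr).2 (hi.mono_set Ioc_subset_Ioi_self)
  have b1 : ∀ s ∈ Ioc 0 r, ‖e s‖ ≤ r * ((‖f s‖ ^ 2 * s + ‖vf m f f1 s‖ ^ 2 * s) / 2) := by
    intro s hs
    have h2 : e s = s ^ 2 * jr (f s) (vf m f f1 s) := by
      have := hs.1.ne'
      simp only [he]; rw [jr_f1 m]; field_simp; ring
    rw [h2, Real.norm_eq_abs, abs_mul, abs_of_nonneg (by positivity)]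
    have h3 := abs_jr_le (f s) (vf m f f1 s)
    have h4 : ‖f s‖ * ‖vf m f f1 s‖ ≤ (‖f s‖ ^ 2 + ‖vf m f f1 s‖ ^ 2) / 2 := by
      nlinarith [sq_nonneg (‖f s‖ - ‖vf m f f1 s‖)]
    calc _ ≤ s ^ 2 * ((‖f s‖ ^ 2 + ‖vf m f f1 s‖ ^ 2) / 2) := by
          gcongr; linarith
      _ = s * (s * ((‖f s‖ ^ 2 + ‖vf m f f1 s‖ ^ 2) / 2)) := by ring
      _ ≤ r * (s * ((‖f s‖ ^ 2 + ‖vf m f f1 s‖ ^ 2) / 2)) := by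
          have := hs.1
          gcongr; exact hs.2
      _ = _ := by ring
  have h2 := intervalIntegral.norm_integral_le_of_norm_le hr (Eventually.of_forall b1)
    (((iu.add iv).div_const 2).const_mul r)
  rw [Real.norm_eq_abs] at h2
  refine h2.trans ?_
  rw [intervalIntegral.integral_const_mul, intervalIntegral.integral_div, intervalIntegral.integral_add iu iv]
  have pos : ∀ (g : ℝ → ℂ), 0 ≤ᵐ[volume.restrict (Ioi 0)] fun s => ‖g s‖ ^ 2 * s := fun g =>
    (ae_restrict_mem measurableSet_Ioi).mono fun s hs => mul_nonneg (by positivity) (le_of_lt hs)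
  have a1 : ∫ s in (0:ℝ)..r, ‖f s‖ ^ 2 * s ≤ 4 * (m + 1) := by
    rw [← hM, intervalIntegral.integral_of_le hr]
    exact setIntegral_mono_set hi (pos f) (Ioc_subset_Ioi_self.eventuallyLE)
  have a2 : ∫ s in (0:ℝ)..r, ‖vf m f f1 s‖ ^ 2 * s ≤ KE := by
    refine le_trans ?_ hvK
    rw [intervalIntegral.integral_of_le hr]
    exact setIntegral_mono_set hvi (pos _) (Ioc_subset_Ioi_self.eventuallyLE)
  gcongr

lemma conc (m : ℕ) (hm : 1 ≤ m) {KE η ρ : ℝ} (hKE : 0 ≤ KE) (hη : 0 < η) (hρ : 0 < ρ) :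
    ∃ Λ : ℝ, ∀ f f1 : ℝ → ℂ, (∀ r, HasDerivAt f (f1 r) r) → Continuous f1 →
    IntegrableOn (fun r => ‖f r‖ ^ 2 * r) (Ioi 0) →
    ∫ r in Ioi 0, ‖f r‖ ^ 2 * r = 4 * (m + 1) →
    IntegrableOn (fun r => ‖vf m f f1 r‖ ^ 2 * r) (Ioi 0) →
    ∫ r in Ioi 0, ‖vf m f f1 r‖ ^ 2 * r ≤ KE →
    IntegrableOn (fun r => ‖f1 r‖ ^ 2 * r) (Ioi 0) →
    Λ < ∫ r in Ioi 0, ‖f1 r‖ ^ 2 * r → ∫ r in Ioi ρ, ‖f r‖ ^ 2 * r ≤ η := by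
  set c : ℝ := (4 * (m + 1) + KE) / 2 with hc
  have hc0 : 0 ≤ c := by positivity
  set X : ℝ := (2 * m + 2 + c * ρ) * 4 / η with hX
  have hX0 : 0 ≤ X := by positivity
  set r1 : ℝ := ρ * Real.exp (-X) with hr1
  have r1pos : 0 < r1 := by positivity
  have r1ρ : r1 ≤ ρ := by
    have : Real.exp (-X) ≤ 1 := Real.exp_le_one_iff.2 (by linarith)
    calc _ ≤ ρ * 1 := by rw [hr1]; gcongr
      _ = ρ := mul_one _
  refine ⟨(2 * KE + 4 * m ^ 2 * (2 * ((1 + m) ^ 2 + r1 * c) / r1 ^ 2 + 2 * KE)) +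
    (2 * KE + 2 * (m + 2) ^ 2 / r1 ^ 2 * (4 * (m + 1))), ?_⟩
  intro f f1 hf cf1 hi hM hvi hvK hfi hlt
  by_contra hcon
  push Not at hcon
  apply hlt.not_ge
  clear hlt
  have cf : Continuous f := continuous_iff_continuousAt.2 fun r => (hf r).continuousAt
  have cw := cont_wf m cf
  have hp := fun {r : ℝ} (hr : 0 ≤ r) => abs_le.1 (poho m hf cf1 hi hM hvi hvK hr)
  have hwρ := wf_eq m hi hM hρ.le
  have hm1 : (1:ℝ) ≤ m := by exact_mod_cast hm
  -- w(r1) ≥ 1/2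
  have hw1 : 1 / 2 ≤ wf m f r1 := by
    by_contra hlt
    push Not at hlt
    have hmon : MonotoneOn (fun r => - wf m f r - η / 4 * Real.log r + c * r) (Icc r1 ρ) := by
      have hder : ∀ x, 0 < x → HasDerivAt (fun r => - wf m f r - η / 4 * Real.log r + c * r)
          ((1/2) * (‖f x‖ ^ 2 * x) - η / 4 * x⁻¹ + c) x := by
        intro x hx
        have := (((hda_wf m cf x).neg).sub ((Real.hasDerivAt_log hx.ne').const_mul (η/4))).add
          ((hasDerivAt_id x).const_mul c)
        refine this.congr_deriv (by ring)
      apply monotoneOn_of_deriv_nonneg (convex_Icc _ _)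
      · intro x hx
        exact (hder x (by linarith [hx.1])).continuousAt.continuousWithinAt
      · intro x hx
        rw [interior_Icc] at hx
        exact (hder x (by linarith [hx.1])).differentiableAt.differentiableWithinAt
      · intro x hx
        rw [interior_Icc] at hx
        have x0 : 0 < x := by linarith [hx.1]
        rw [(hder x x0).deriv]
        have e1 := (hp x0.le).1
        have e2 : wf m f x ≤ wf m f r1 := wf_anti m cf r1pos.le x0.le hx.1.le
        have e3 : wf m f ρ ≤ wf m f x := wf_anti m cf x0.le hρ.le hx.2.le
        -- (1+m)^2-(1+w)^2 = (m-w)(m+2+w) ≥ (1/2)(η/2)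
        have e4 : η / 4 ≤ (m - wf m f x) * (m + 2 + wf m f x) := by
          have a1 : 1/2 ≤ m - wf m f x := by linarith
          have a2 : η / 2 ≤ m + 2 + wf m f x := by linarith
          nlinarith
        have e5 : η / 4 - c * x ≤ (1/2) * x ^ 2 * ‖f x‖ ^ 2 := by nlinarith
        have : (1/2) * (‖f x‖ ^ 2 * x) - η / 4 * x⁻¹ + c =
          ((1/2) * x ^ 2 * ‖f x‖ ^ 2 - (η / 4 - c * x)) / x := by field_simp; ring
        rw [this]
        exact div_nonneg (by linarith) x0.le
    have := hmon ⟨le_rfl, r1ρ⟩ ⟨r1ρ, le_rfl⟩ r1ρ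
    simp only at this
    have hl : Real.log r1 = Real.log ρ - X := by
      rw [hr1, Real.log_mul hρ.ne' (Real.exp_ne_zero _), Real.log_exp]; ring
    rw [hl] at this
    have hXe : η / 4 * X = 2 * m + 2 + c * ρ := by rw [hX]; field_simp
    have : 0 ≤ c * r1 := by positivity
    have := wf_ge m hi hM hρ.le
    nlinarith
  have hu1 : ‖f r1‖ ^ 2 ≤ 2 * ((1 + m) ^ 2 + r1 * c) / r1 ^ 2 := by
    rw [le_div_iff₀ (by positivity)]
    have := (hp r1pos.le).2
    nlinarith [sq_nonneg (1 + wf m f r1)]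
  have iv : IntervalIntegrable (fun s => ‖vf m f f1 s‖ ^ 2 * s) volume 0 r1 :=
    (intervalIntegrable_iff_integrableOn_Ioc_of_le r1pos.le).2 (hvi.mono_set Ioc_subset_Ioi_self)
  have pos : ∀ (g : ℝ → ℂ), 0 ≤ᵐ[volume.restrict (Ioi 0)] fun s => ‖g s‖ ^ 2 * s := fun g =>
    (ae_restrict_mem measurableSet_Ioi).mono fun s hs => mul_nonneg (by positivity) (le_of_lt hs)
  have hn : ∀ s, ‖f1 s‖ ^ 2 ≤ 2 * ‖vf m f f1 s‖ ^ 2 + 2 * (wf m f s / s) ^ 2 * ‖f s‖ ^ 2 := by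
    intro s
    have : ‖f1 s‖ ≤ ‖vf m f f1 s‖ + |wf m f s / s| * ‖f s‖ := by
      conv_lhs => rw [f1_eq m f f1 s]
      refine (norm_add_le _ _).trans ?_
      rw [norm_mul, Complex.norm_real, Real.norm_eq_abs]
    calc _ ≤ (‖vf m f f1 s‖ + |wf m f s / s| * ‖f s‖) ^ 2 := by gcongr
      _ ≤ 2 * ‖vf m f f1 s‖ ^ 2 + 2 * |wf m f s / s| ^ 2 * ‖f s‖ ^ 2 := by
        nlinarith [sq_nonneg (‖vf m f f1 s‖ - |wf m f s / s| * ‖f s‖)]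
      _ = _ := by rw [sq_abs]
  rw [← intervalIntegral.integral_interval_add_Ioi hfi (hfi.mono_set (Ioi_subset_Ioi r1pos.le))]
  apply add_le_add
  · have cj : Continuous fun s => 2 * jr (f s) (f1 s) := by fun_prop
    have ftc := intervalIntegral.integral_eq_sub_of_hasDerivAt (a := 0) (b := r1)
      (fun s _ => hda_nsq (hf s)) (cj.intervalIntegrable _ _)
    have hm0 : ∫ s in (0:ℝ)..r1, ‖f1 s‖ ^ 2 * s ≤ ∫ s in (0:ℝ)..r1,
        (2 * (‖vf m f f1 s‖ ^ 2 * s) + 4 * m ^ 2 * (2 * jr (f s) (f1 s) + 2 * (‖vf m f f1 s‖ ^ 2 * s))) := by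
      apply intervalIntegral.integral_mono_on_of_le_Ioo r1pos.le
      · exact (by fun_prop : Continuous fun s => ‖f1 s‖ ^ 2 * s).intervalIntegrable _ _
      · exact (iv.const_mul 2).add (((cj.intervalIntegrable _ _).add (iv.const_mul 2)).const_mul _)
      · intro s hs
        have s0 := hs.1
        have w1 : 1/2 ≤ wf m f s := hw1.trans (wf_anti m cf s0.le r1pos.le hs.2.le)
        have w2 := wf_le m cf s0.le
        have g1 := jr_f1 m f f1 s
        have g2 := (abs_le.1 (abs_jr_le (f s) (vf m f f1 s))).1
        set a := ‖f s‖
        set b := ‖vf m f f1 s‖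
        set w := wf m f s
        have g3 : 1 / 2 * a ^ 2 / s ≤ 2 * jr (f s) (f1 s) + 2 * (b ^ 2 * s) := by
          rw [g1]
          have : 0 ≤ (a - 2 * s * b) ^ 2 / (2 * s) := by positivity
          have h5 : (a - 2 * s * b) ^ 2 / (2 * s) = 1/2 * a ^ 2 / s - 2 * a * b + 2 * (b ^ 2 * s) := by
            field_simp; ring
          have h6 : a ^ 2 / s ≤ 2 * (w / s * a ^ 2) := by
            have : 2 * (w / s * a ^ 2) - a ^ 2 / s = (2 * w - 1) * a ^ 2 / s := by ring
            have : 0 ≤ (2 * w - 1) * a ^ 2 / s :=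
              div_nonneg (mul_nonneg (by linarith) (by positivity)) s0.le
            linarith
          have h7 : 1/2 * a ^ 2 / s = 1/2 * (a ^ 2 / s) := by ring
          linarith
        have g4 : (w / s) ^ 2 * a ^ 2 * s ≤ m ^ 2 * (a ^ 2 / s) := by
          have : (w / s) ^ 2 * a ^ 2 * s = w ^ 2 * (a ^ 2 / s) := by field_simp
          rw [this]; gcongr
        calc _ ≤ (2 * b ^ 2 + 2 * (w / s) ^ 2 * a ^ 2) * s := by gcongr; exact hn s
          _ = 2 * (b ^ 2 * s) + 2 * ((w / s) ^ 2 * a ^ 2 * s) := by ring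
          _ ≤ 2 * (b ^ 2 * s) + 2 * (m ^ 2 * (a ^ 2 / s)) := by gcongr
          _ = 2 * (b ^ 2 * s) + 4 * m ^ 2 * (1 / 2 * a ^ 2 / s) := by ring
          _ ≤ _ := by gcongr
    refine hm0.trans ?_
    rw [intervalIntegral.integral_add (iv.const_mul 2)
      (((cj.intervalIntegrable _ _).add (iv.const_mul 2)).const_mul _),
      intervalIntegral.integral_const_mul, intervalIntegral.integral_const_mul,
      intervalIntegral.integral_add (cj.intervalIntegrable _ _) (iv.const_mul 2), ftc,
      intervalIntegral.integral_const_mul]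
    have a2 : ∫ s in (0:ℝ)..r1, ‖vf m f f1 s‖ ^ 2 * s ≤ KE := by
      refine le_trans ?_ hvK
      rw [intervalIntegral.integral_of_le r1pos.le]
      exact setIntegral_mono_set hvi (pos _) (Ioc_subset_Ioi_self.eventuallyLE)
    gcongr
    have := sq_nonneg ‖f 0‖
    linarith
  · have hv' := hvi.mono_set (Ioi_subset_Ioi r1pos.le)
    have hi' := hi.mono_set (Ioi_subset_Ioi r1pos.le)
    calc _ ≤ ∫ s in Ioi r1, (2 * (‖vf m f f1 s‖ ^ 2 * s) + 2 * (m + 2) ^ 2 / r1 ^ 2 * (‖f s‖ ^ 2 * s)) := by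
          apply setIntegral_mono_on (hfi.mono_set (Ioi_subset_Ioi r1pos.le))
            ((hv'.const_mul 2).add (hi'.const_mul _)) measurableSet_Ioi
          intro s hs
          have s0 : 0 < s := r1pos.trans hs
          have hs' : r1 ≤ s := le_of_lt hs
          have w2 : (wf m f s / s) ^ 2 ≤ (m + 2) ^ 2 / r1 ^ 2 := by
            rw [div_pow, ← sq_abs (wf m f s)]
            gcongr
            exact wf_abs m cf hi hM s0.le
          calc _ ≤ (2 * ‖vf m f f1 s‖ ^ 2 + 2 * (wf m f s / s) ^ 2 * ‖f s‖ ^ 2) * s := by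
                gcongr; exact hn s
            _ ≤ (2 * ‖vf m f f1 s‖ ^ 2 + 2 * ((m + 2) ^ 2 / r1 ^ 2) * ‖f s‖ ^ 2) * s := by gcongr
            _ = _ := by simp only [Pi.add_apply]; ring
      _ = 2 * (∫ s in Ioi r1, ‖vf m f f1 s‖ ^ 2 * s) + 2 * (m + 2) ^ 2 / r1 ^ 2 *
          ∫ s in Ioi r1, ‖f s‖ ^ 2 * s := by
          rw [integral_add (hv'.const_mul 2) (hi'.const_mul _), integral_const_mul, integral_const_mul]
      _ ≤ _ := by
          gcongr
          · exact (setIntegral_mono_set hvi (pos _) (Ioi_subset_Ioi r1pos.le).eventuallyLE).trans hvK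
          · rw [← hM]
            exact setIntegral_mono_set hi (pos _) (Ioi_subset_Ioi r1pos.le).eventuallyLE

end

noncomputable section

def pt (f : ℝ × ℝ → ℂ) (p : ℝ × ℝ) : ℂ := fderiv ℝ f p (1, 0)
def pr (f : ℝ × ℝ → ℂ) (p : ℝ × ℝ) : ℂ := fderiv ℝ f p (0, 1)

lemma pt_smooth {f : ℝ × ℝ → ℂ} {Ω : Set (ℝ × ℝ)} (hΩ : IsOpen Ω) (hf : ContDiffOn ℝ (⊤ : ℕ∞) f Ω) :
    ContDiffOn ℝ (⊤ : ℕ∞) (pt f) Ω :=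
  (hf.fderiv_of_isOpen hΩ (m := (⊤ : ℕ∞)) (by simp)).clm_apply contDiffOn_const

lemma pr_smooth {f : ℝ × ℝ → ℂ} {Ω : Set (ℝ × ℝ)} (hΩ : IsOpen Ω) (hf : ContDiffOn ℝ (⊤ : ℕ∞) f Ω) :
    ContDiffOn ℝ (⊤ : ℕ∞) (pr f) Ω :=
  (hf.fderiv_of_isOpen hΩ (m := (⊤ : ℕ∞)) (by simp)).clm_apply contDiffOn_const

lemma cda {f : ℝ × ℝ → ℂ} {Ω : Set (ℝ × ℝ)} (hΩ : IsOpen Ω) (hf : ContDiffOn ℝ (⊤ : ℕ∞) f Ω)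
    {p : ℝ × ℝ} (hp : p ∈ Ω) : ContDiffAt ℝ (⊤ : ℕ∞) f p := hf.contDiffAt (hΩ.mem_nhds hp)

lemma hda_pt {f : ℝ × ℝ → ℂ} {Ω : Set (ℝ × ℝ)} (hΩ : IsOpen Ω) (hf : ContDiffOn ℝ (⊤ : ℕ∞) f Ω)
    {t r : ℝ} (hp : (t, r) ∈ Ω) : HasDerivAt (fun s => f (s, r)) (pt f (t, r)) t := by
  have h := ((cda hΩ hf hp).differentiableAt (by simp)).hasFDerivAt
  have h2 : HasDerivAt (fun s : ℝ => (s, r)) ((1:ℝ), (0:ℝ)) t :=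
    (hasDerivAt_id t).prodMk (hasDerivAt_const t r)
  exact h.comp_hasDerivAt t h2

lemma hda_pr {f : ℝ × ℝ → ℂ} {Ω : Set (ℝ × ℝ)} (hΩ : IsOpen Ω) (hf : ContDiffOn ℝ (⊤ : ℕ∞) f Ω)
    {t r : ℝ} (hp : (t, r) ∈ Ω) : HasDerivAt (fun s => f (t, s)) (pr f (t, r)) r := by
  have h := ((cda hΩ hf hp).differentiableAt (by simp)).hasFDerivAt
  have h2 : HasDerivAt (fun s : ℝ => (t, s)) ((0:ℝ), (1:ℝ)) r :=
    (hasDerivAt_const r t).prodMk (hasDerivAt_id r)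
  exact h.comp_hasDerivAt r h2

lemma pt_pr {f : ℝ × ℝ → ℂ} {Ω : Set (ℝ × ℝ)} (hΩ : IsOpen Ω) (hf : ContDiffOn ℝ (⊤ : ℕ∞) f Ω)
    {p : ℝ × ℝ} (hp : p ∈ Ω) : pt (pr f) p = pr (pt f) p := by
  have h1 : DifferentiableAt ℝ (fderiv ℝ f) p :=
    ((hf.fderiv_of_isOpen hΩ (m := (⊤ : ℕ∞)) (by simp)).contDiffAt (hΩ.mem_nhds hp)).differentiableAt
      (by simp)
  have hs : IsSymmSndFDerivAt ℝ f p :=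
    (cda hΩ hf hp).isSymmSndFDerivAt (by simp; exact WithTop.coe_le_coe.2 (le_top : (2:ℕ∞) ≤ ⊤))
  have e : ∀ a : ℝ × ℝ, fderiv ℝ (fun q => fderiv ℝ f q a) p = (fderiv ℝ (fderiv ℝ f) p).flip a := by
    intro a
    have := h1.hasFDerivAt.clm_apply (hasFDerivAt_const a p)
    rw [this.fderiv]; ext <;> simp
  show fderiv ℝ (fun q => fderiv ℝ f q (0,1)) p (1,0) = fderiv ℝ (fun q => fderiv ℝ f q (1,0)) p (0,1)
  rw [e, e]
  exact hs.eq _ _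

structure CS (m : ℕ) (t0 : ℝ) (F : ℝ × ℝ → ℂ) : Prop where
  smooth : ContDiffOn ℝ (⊤ : ℕ∞) F (Ioo t0 0 ×ˢ univ)
  zero : ∀ t ∈ Ioo t0 0, F (t, 0) = 0
  int : ∀ t ∈ Ioo t0 0, IntegrableOn (fun r => ‖F (t, r)‖ ^ 2 * r) (Ioi 0)
  mass : ∀ t ∈ Ioo t0 0, ∫ r in Ioi 0, ‖F (t, r)‖ ^ 2 * r = 4 * (m + 1)
  eq : ∀ t ∈ Ioo t0 0, ∀ r, 0 < r → Complex.I * pt F (t, r)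
    - (At m (fun s => F (t, s)) r : ℂ) * F (t, r) + pr (pr F) (t, r) + (1 / (r : ℂ)) * pr F (t, r)
    - (((wf m (fun s => F (t, s)) r) / r : ℝ) : ℂ) ^ 2 * F (t, r)
    + ((‖F (t, r)‖ : ℝ) : ℂ) ^ 2 * F (t, r) = 0
  h1 : ∀ a b, t0 < a → b < 0 → ∃ K, ∀ t ∈ Icc a b,
    IntegrableOn (fun r => ‖pr F (t, r)‖ ^ 2 * r) (Ioi 0) ∧ ∫ r in Ioi 0, ‖pr F (t, r)‖ ^ 2 * r ≤ K

lemma oΩ (t0 : ℝ) : IsOpen (Ioo t0 0 ×ˢ (univ : Set ℝ)) := isOpen_Ioo.prod isOpen_univ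

variable {m : ℕ} {t0 : ℝ} {F : ℝ × ℝ → ℂ}

lemma mΩ {t : ℝ} (ht : t ∈ Ioo t0 0) (r : ℝ) : (t, r) ∈ Ioo t0 0 ×ˢ (univ : Set ℝ) := ⟨ht, trivial⟩

lemma sect_r {f : ℝ × ℝ → ℂ} (hf : ContDiffOn ℝ (⊤ : ℕ∞) f (Ioo t0 0 ×ˢ univ)) {t : ℝ}
    (ht : t ∈ Ioo t0 0) : Continuous fun r => f (t, r) :=
  continuous_iff_continuousAt.2 fun r => (hda_pr (oΩ t0) hf (mΩ ht r)).continuousAt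

/-- bounds near `r = 0`. -/
lemma CS.near0 (h : CS m t0 F) {a b : ℝ} (ha : t0 < a) (hb : b < 0) :
    ∃ M, 0 ≤ M ∧ ∀ t ∈ Icc a b, ∀ r ∈ Icc (0:ℝ) 1, ‖pr F (t, r)‖ ≤ M ∧ ‖F (t, r)‖ ≤ M * r := by
  have hc : ContinuousOn (pr F) (Icc a b ×ˢ Icc (0:ℝ) 1) :=
    (pr_smooth (oΩ t0) h.smooth).continuousOn.mono fun p hp =>
      ⟨⟨ha.trans_le hp.1.1, hp.1.2.trans_lt hb⟩, trivial⟩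
  obtain ⟨M, hM⟩ := (isCompact_Icc.prod isCompact_Icc).exists_bound_of_continuousOn hc
  refine ⟨max M 0, le_max_right _ _, fun t ht r hr => ?_⟩
  have hI : t ∈ Ioo t0 0 := ⟨ha.trans_le ht.1, ht.2.trans_lt hb⟩
  refine ⟨(hM (t, r) ⟨ht, hr⟩).trans (le_max_left _ _), ?_⟩
  have := (convex_Icc (0:ℝ) 1).norm_image_sub_le_of_norm_hasDerivWithin_le
    (f := fun s => F (t, s)) (f' := fun s => pr F (t, s)) (C := max M 0)
    (fun x _ => (hda_pr (oΩ t0) h.smooth (mΩ hI x)).hasDerivWithinAt)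
    (fun x hx => (hM (t, x) ⟨ht, hx⟩).trans (le_max_left _ _)) (left_mem_Icc.2 zero_le_one) hr
  simpa [h.zero t hI, abs_of_nonneg hr.1] using this

lemma jr_eq_of_eq {a b c d : ℂ} {A B C : ℝ} {q : ℝ}
    (h : Complex.I * b - (A:ℂ) * a + d + (q:ℂ) * c - (B:ℂ) ^ 2 * a + (C:ℂ) ^ 2 * a = 0) :
    jr a b = - (jm a d + q * jm a c) := by
  have hb : b = -Complex.I * ((A:ℂ) * a - d - (q:ℂ) * c + (B:ℂ) ^ 2 * a - (C:ℂ) ^ 2 * a) := by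
    have : Complex.I * (Complex.I * b) = - b := by rw [← mul_assoc, Complex.I_mul_I]; ring
    linear_combination (-Complex.I) * h + this
  have e1 : ((B:ℂ) ^ 2) = ((B ^ 2 : ℝ) : ℂ) := by push_cast; rfl
  have e2 : ((C:ℂ) ^ 2) = ((C ^ 2 : ℝ) : ℂ) := by push_cast; rfl
  rw [hb, e1, e2]
  simp only [jr, jm, Complex.mul_re, Complex.mul_im, Complex.sub_re, Complex.sub_im, Complex.add_re,
    Complex.add_im, Complex.neg_re, Complex.neg_im, Complex.I_re, Complex.I_im, Complex.ofReal_re,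
    Complex.ofReal_im]
  ring

lemma CS.wt (h : CS m t0 F) {t : ℝ} (ht : t ∈ Ioo t0 0) {r : ℝ} (hr : 0 ≤ r) :
    HasDerivAt (fun τ => wf m (fun s => F (τ, s)) r) (r * jm (F (t, r)) (pr F (t, r))) t := by
  obtain ⟨a, ha⟩ := exists_between ht.1
  obtain ⟨b, hb⟩ := exists_between ht.2
  have hsub : ∀ τ ∈ Icc a b, τ ∈ Ioo t0 0 := fun τ hτ => ⟨ha.1.trans_le hτ.1, hτ.2.trans_lt hb.2⟩
  have hft := pt_smooth (oΩ t0) h.smooth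
  have hfr := pr_smooth (oΩ t0) h.smooth
  have hfrr := pr_smooth (oΩ t0) hfr
  have hd : ∀ τ ∈ Ioo t0 0, ∀ s, HasDerivAt (fun τ => ‖F (τ, s)‖ ^ 2 * s)
      (2 * jr (F (τ, s)) (pt F (τ, s)) * s) τ := fun τ hτ s =>
    (hda_nsq (hda_pt (oΩ t0) h.smooth (mΩ hτ s))).mul_const s
  have hc : ContinuousOn (fun p : ℝ × ℝ => 2 * jr (F p) (pt F p) * p.2) (Icc a b ×ˢ Icc 0 r) := by
    have c1 : ContinuousOn F (Icc a b ×ˢ Icc 0 r) :=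
      h.smooth.continuousOn.mono fun p hp => ⟨hsub _ hp.1, trivial⟩
    have c2 : ContinuousOn (pt F) (Icc a b ×ˢ Icc 0 r) :=
      hft.continuousOn.mono fun p hp => ⟨hsub _ hp.1, trivial⟩
    unfold jr
    have c3 := Complex.continuous_re.comp_continuousOn c1
    have c4 := Complex.continuous_im.comp_continuousOn c1
    have c5 := Complex.continuous_re.comp_continuousOn c2
    have c6 := Complex.continuous_im.comp_continuousOn c2
    exact (continuousOn_const.mul ((c3.mul c5).add (c4.mul c6))).mul continuousOn_snd
  obtain ⟨M, hM⟩ := (isCompact_Icc.prod isCompact_Icc).exists_bound_of_continuousOn hc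
  have cF : ∀ τ ∈ Ioo t0 0, Continuous fun s => ‖F (τ, s)‖ ^ 2 * s := fun τ hτ => by
    exact ((sect_r h.smooth hτ).norm.pow 2).mul continuous_id
  have key := intervalIntegral.hasDerivAt_integral_of_dominated_loc_of_deriv_le (μ := volume)
    (F := fun τ s => ‖F (τ, s)‖ ^ 2 * s) (F' := fun τ s => 2 * jr (F (τ, s)) (pt F (τ, s)) * s)
    (x₀ := t) (a := 0) (b := r) (s := Icc a b) (bound := fun _ => M) (Icc_mem_nhds ha.2 hb.1)
    ?_ ((cF t ht).intervalIntegrable _ _) ?_ ?_ (by simp) ?_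
  · have k2 := (key.2.const_mul (-(1/2))).const_add (m:ℝ)
    refine k2.congr_deriv ?_
    have c1 := sect_r h.smooth ht
    have c2 := sect_r hfr ht
    have c3 := sect_r hfrr ht
    have ftc := intervalIntegral.integral_eq_sub_of_hasDerivAt_of_le hr
      (f := fun s => s * jm (F (t, s)) (pr F (t, s)))
      (f' := fun s => jm (F (t, s)) (pr F (t, s)) + s * jm (F (t, s)) (pr (pr F) (t, s)))
      (continuous_id.mul (cont_jm c1 c2)).continuousOn ?_
      (((cont_jm c1 c2).add (continuous_id.mul (cont_jm c1 c3))).intervalIntegrable _ _)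
    · have e : ∫ s in (0:ℝ)..r, 2 * jr (F (t, s)) (pt F (t, s)) * s =
          ∫ s in (0:ℝ)..r, (-2) * (jm (F (t, s)) (pr F (t, s)) + s * jm (F (t, s)) (pr (pr F) (t, s))) := by
        apply intervalIntegral.integral_congr_ae
        refine Eventually.of_forall fun s hs => ?_
        rw [uIoc_of_le hr] at hs
        have s0 := hs.1
        have := h.eq t ht s hs.1
        have e0 : (1 / (s:ℂ)) = ((1 / s : ℝ) : ℂ) := by push_cast; rfl
        rw [e0] at this
        rw [jr_eq_of_eq this]
        field_simp
        ring
      rw [e, intervalIntegral.integral_const_mul, ftc]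
      ring
    · intro s _
      have := (hasDerivAt_id s).mul (hda_jm (hda_pr (oΩ t0) h.smooth (mΩ ht s))
        (hda_pr (oΩ t0) hfr (mΩ ht s)))
      refine this.congr_deriv ?_
      simp only [jm, id]; ring
  · filter_upwards [Icc_mem_nhds ha.2 hb.1] with τ hτ
    exact (cF τ (hsub τ hτ)).aestronglyMeasurable
  · have c1 := sect_r h.smooth ht
    have c2 := sect_r hft ht
    exact ((continuous_const.mul (cont_jr c1 c2)).mul continuous_id).aestronglyMeasurable
  · refine Eventually.of_forall fun s hs τ hτ => ?_
    rw [uIoc_of_le hr] at hs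
    exact hM (τ, s) ⟨hτ, ⟨hs.1.le, hs.2⟩⟩
  · exact Eventually.of_forall fun s _ τ hτ => hd τ (hsub τ hτ) s

end

noncomputable section

section fixed
variable {m : ℕ} {f f1 : ℝ → ℂ} {M : ℝ}

def dm (M : ℝ) (f : ℝ → ℂ) (s : ℝ) : ℝ := (Ioc (0:ℝ) 1).indicator (fun _ => M ^ 2) s + ‖f s‖ ^ 2 * s

lemma dm_int (M : ℝ) (hi : IntegrableOn (fun r => ‖f r‖ ^ 2 * r) (Ioi 0)) :
    IntegrableOn (dm M f) (Ioi 0) := by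
  refine IntegrableOn.add ?_ hi
  refine Integrable.integrableOn ?_
  rw [integrable_indicator_iff measurableSet_Ioc]
  simp

lemma dm_integral (M : ℝ) (hi : IntegrableOn (fun r => ‖f r‖ ^ 2 * r) (Ioi 0))
    (hM : ∫ r in Ioi 0, ‖f r‖ ^ 2 * r = 4 * (m + 1)) :
    ∫ r in Ioi 0, dm M f r = M ^ 2 + 4 * (m + 1) := by
  unfold dm
  rw [integral_add _ hi, hM]
  · rw [setIntegral_indicator measurableSet_Ioc, inter_eq_right.2 Ioc_subset_Ioi_self]
    simp
  · refine Integrable.integrableOn ?_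
    rw [integrable_indicator_iff measurableSet_Ioc]
    simp

lemma dm_nonneg {s : ℝ} (hs : 0 ≤ s) : 0 ≤ dm M f s :=
  add_nonneg (indicator_nonneg (fun _ _ => by positivity) _) (by positivity)

lemma div_le_dm (h0 : ∀ r ∈ Icc (0:ℝ) 1, ‖f r‖ ≤ M * r) {s : ℝ} (hs : 0 < s) :
    ‖f s‖ ^ 2 / s ≤ dm M f s := by
  unfold dm
  by_cases h : s ≤ 1
  · rw [indicator_of_mem (show s ∈ Ioc (0:ℝ) 1 from ⟨hs, h⟩)]
    have h1 := h0 s ⟨hs.le, h⟩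
    have : ‖f s‖ ^ 2 / s ≤ M ^ 2 := by
      rw [div_le_iff₀ hs]
      calc _ ≤ (M * s) ^ 2 := by gcongr
        _ = M ^ 2 * s * s := by ring
        _ ≤ M ^ 2 * s * 1 := by gcongr
        _ = _ := by ring
    have : 0 ≤ ‖f s‖ ^ 2 * s := by positivity
    linarith
  · rw [indicator_of_notMem (show s ∉ Ioc (0:ℝ) 1 from fun hh => h hh.2), zero_add, div_le_iff₀ hs]
    push Not at h
    have : 1 ≤ s * s := by nlinarith
    nlinarith [sq_nonneg ‖f s‖]

lemma At_bd (cf : Continuous f) (h0 : ∀ r ∈ Icc (0:ℝ) 1, ‖f r‖ ≤ M * r)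
    (hi : IntegrableOn (fun r => ‖f r‖ ^ 2 * r) (Ioi 0))
    (hM : ∫ r in Ioi 0, ‖f r‖ ^ 2 * r = 4 * (m + 1)) {s : ℝ} (hs : 0 < s) :
    |wf m f s * ‖f s‖ ^ 2 / s| ≤ (m + 2) * dm M f s := by
  rw [mul_div_assoc, abs_mul, abs_of_nonneg (by positivity : 0 ≤ ‖f s‖ ^ 2 / s)]
  exact mul_le_mul (wf_abs m cf hi hM hs.le) (div_le_dm h0 hs) (by positivity) (by positivity)

lemma At_int (cf : Continuous f) (h0 : ∀ r ∈ Icc (0:ℝ) 1, ‖f r‖ ≤ M * r)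
    (hi : IntegrableOn (fun r => ‖f r‖ ^ 2 * r) (Ioi 0))
    (hM : ∫ r in Ioi 0, ‖f r‖ ^ 2 * r = 4 * (m + 1)) :
    IntegrableOn (fun s => wf m f s * ‖f s‖ ^ 2 / s) (Ioi 0) := by
  have cw := cont_wf m cf
  refine Integrable.mono' ((dm_int M hi).const_mul (m + 2)) ?_ ?_
  · refine ContinuousOn.aestronglyMeasurable ?_ measurableSet_Ioi
    exact ContinuousOn.div (by fun_prop) continuousOn_id fun x hx => ne_of_gt hx
  · exact (ae_restrict_mem measurableSet_Ioi).mono fun s hs => At_bd cf h0 hi hM hs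

lemma At_abs (cf : Continuous f) (h0 : ∀ r ∈ Icc (0:ℝ) 1, ‖f r‖ ≤ M * r)
    (hi : IntegrableOn (fun r => ‖f r‖ ^ 2 * r) (Ioi 0))
    (hM : ∫ r in Ioi 0, ‖f r‖ ^ 2 * r = 4 * (m + 1)) {r : ℝ} (hr : 0 ≤ r) :
    |At m f r| ≤ (m + 2) * (M ^ 2 + 4 * (m + 1)) := by
  rw [At, abs_neg]
  have := norm_integral_le_of_norm_le (μ := volume.restrict (Ioi r))
    (f := fun s => wf m f s * ‖f s‖ ^ 2 / s)
    (((dm_int M hi).mono_set (Ioi_subset_Ioi hr)).const_mul ((m:ℝ) + 2))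
    ((ae_restrict_mem measurableSet_Ioi).mono fun s hs => At_bd cf h0 hi hM (hr.trans_lt hs))
  refine this.trans ?_
  rw [integral_const_mul]
  gcongr
  rw [← dm_integral M hi hM]
  exact setIntegral_mono_set (dm_int M hi)
    ((ae_restrict_mem measurableSet_Ioi).mono fun s hs => dm_nonneg (le_of_lt hs))
    (Ioi_subset_Ioi hr).eventuallyLE

lemma hda_At (cf : Continuous f) (h0 : ∀ r ∈ Icc (0:ℝ) 1, ‖f r‖ ≤ M * r)
    (hi : IntegrableOn (fun r => ‖f r‖ ^ 2 * r) (Ioi 0))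
    (hM : ∫ r in Ioi 0, ‖f r‖ ^ 2 * r = 4 * (m + 1)) {r : ℝ} (hr : 0 < r) :
    HasDerivAt (At m f) (wf m f r * ‖f r‖ ^ 2 / r) r := by
  have cw := cont_wf m cf
  have hI := At_int cf h0 hi hM
  set g := fun s => wf m f s * ‖f s‖ ^ 2 / s with hg
  have ii : IntervalIntegrable g volume 0 r :=
    (intervalIntegrable_iff_integrableOn_Ioc_of_le hr.le).2 (hI.mono_set Ioc_subset_Ioi_self)
  have cg : ContinuousOn g (Ioi 0) :=
    ContinuousOn.div (by fun_prop) continuousOn_id fun x hx => ne_of_gt hx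
  have h1 := intervalIntegral.integral_hasDerivAt_right ii
    (cg.stronglyMeasurableAtFilter isOpen_Ioi r hr) (cg.continuousAt (Ioi_mem_nhds hr))
  have h2 := h1.sub_const (∫ s in Ioi 0, g s)
  refine h2.congr_of_eventuallyEq ?_
  filter_upwards [Ioi_mem_nhds hr] with x hx
  have := intervalIntegral.integral_interval_add_Ioi hI (hI.mono_set (Ioi_subset_Ioi (le_of_lt hx)))
  rw [← this]
  show - (∫ s in Ioi x, g s) = _
  ring

lemma vf_sq_le (cf : Continuous f) (h0 : ∀ r ∈ Icc (0:ℝ) 1, ‖f r‖ ≤ M * r)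
    (hi : IntegrableOn (fun r => ‖f r‖ ^ 2 * r) (Ioi 0))
    (hM : ∫ r in Ioi 0, ‖f r‖ ^ 2 * r = 4 * (m + 1)) {s : ℝ} (hs : 0 < s) :
    ‖vf m f f1 s‖ ^ 2 * s ≤ 2 * (‖f1 s‖ ^ 2 * s) + 2 * (m + 2) ^ 2 * dm M f s := by
  have h1 : ‖vf m f f1 s‖ ≤ ‖f1 s‖ + |wf m f s / s| * ‖f s‖ := by
    refine (norm_sub_le _ _).trans ?_
    rw [norm_mul, Complex.norm_real, Real.norm_eq_abs]
  have h2 : ‖vf m f f1 s‖ ^ 2 ≤ 2 * ‖f1 s‖ ^ 2 + 2 * (wf m f s / s) ^ 2 * ‖f s‖ ^ 2 := by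
    calc _ ≤ (‖f1 s‖ + |wf m f s / s| * ‖f s‖) ^ 2 := by gcongr
      _ ≤ 2 * ‖f1 s‖ ^ 2 + 2 * |wf m f s / s| ^ 2 * ‖f s‖ ^ 2 := by
        nlinarith [sq_nonneg (‖f1 s‖ - |wf m f s / s| * ‖f s‖)]
      _ = _ := by rw [sq_abs]
  have hw : wf m f s ^ 2 ≤ (m + 2) ^ 2 := by
    rw [← sq_abs]; gcongr; exact wf_abs m cf hi hM hs.le
  calc _ ≤ (2 * ‖f1 s‖ ^ 2 + 2 * (wf m f s / s) ^ 2 * ‖f s‖ ^ 2) * s := by gcongr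
    _ = 2 * (‖f1 s‖ ^ 2 * s) + 2 * (wf m f s ^ 2 * (‖f s‖ ^ 2 / s)) := by field_simp
    _ ≤ 2 * (‖f1 s‖ ^ 2 * s) + 2 * ((m + 2) ^ 2 * dm M f s) := by
        have := div_le_dm h0 hs
        gcongr
    _ = _ := by ring

lemma vf_lint (cf : Continuous f) (h0 : ∀ r ∈ Icc (0:ℝ) 1, ‖f r‖ ≤ M * r)
    (hi : IntegrableOn (fun r => ‖f r‖ ^ 2 * r) (Ioi 0))
    (hM : ∫ r in Ioi 0, ‖f r‖ ^ 2 * r = 4 * (m + 1)) {K : ℝ}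
    (hfi : IntegrableOn (fun r => ‖f1 r‖ ^ 2 * r) (Ioi 0)) (hK : ∫ r in Ioi 0, ‖f1 r‖ ^ 2 * r ≤ K) :
    ∫⁻ r in Ioi 0, ENNReal.ofReal (‖vf m f f1 r‖ ^ 2 * r) ≤
      ENNReal.ofReal (2 * K + 2 * (m + 2) ^ 2 * (M ^ 2 + 4 * (m + 1))) := by
  have hd : Integrable (fun s => 2 * (‖f1 s‖ ^ 2 * s) + 2 * (m + 2) ^ 2 * dm M f s)
      (volume.restrict (Ioi 0)) := (hfi.const_mul 2).add ((dm_int M hi).const_mul (2 * ((m:ℝ) + 2) ^ 2))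
  calc _ ≤ ∫⁻ s in Ioi 0, ENNReal.ofReal (2 * (‖f1 s‖ ^ 2 * s) + 2 * (m + 2) ^ 2 * dm M f s) := by
        apply setLIntegral_mono' measurableSet_Ioi
        intro s hs
        exact ENNReal.ofReal_le_ofReal (vf_sq_le cf h0 hi hM hs)
    _ = ENNReal.ofReal (∫ s in Ioi 0, (2 * (‖f1 s‖ ^ 2 * s) + 2 * (m + 2) ^ 2 * dm M f s)) := by
        rw [ofReal_integral_eq_lintegral_ofReal hd]
        · refine (ae_restrict_mem measurableSet_Ioi).mono fun s hs => ?_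
          have hs' : 0 ≤ s := le_of_lt hs
          have : 0 ≤ dm M f s := dm_nonneg hs'
          show 0 ≤ 2 * (‖f1 s‖ ^ 2 * s) + 2 * (m + 2) ^ 2 * dm M f s
          positivity
    _ ≤ _ := by
        apply ENNReal.ofReal_le_ofReal
        rw [integral_add (hfi.const_mul 2) ((dm_int M hi).const_mul _), integral_const_mul,
          integral_const_mul, dm_integral M hi hM]
        gcongr

lemma sup_bd (hM0 : 0 ≤ M) (hf : ∀ r, HasDerivAt f (f1 r) r) (cf1 : Continuous f1)
    (h0 : ∀ r ∈ Icc (0:ℝ) 1, ‖f r‖ ≤ M * r)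
    (hi : IntegrableOn (fun r => ‖f r‖ ^ 2 * r) (Ioi 0))
    (hM : ∫ r in Ioi 0, ‖f r‖ ^ 2 * r = 4 * (m + 1)) {K : ℝ} (hK0 : 0 ≤ K)
    (hfi : IntegrableOn (fun r => ‖f1 r‖ ^ 2 * r) (Ioi 0)) (hK : ∫ r in Ioi 0, ‖f1 r‖ ^ 2 * r ≤ K)
    {r : ℝ} (hr : 0 < r) : ‖f r‖ ^ 2 ≤ M ^ 2 + (4 * (m + 1) + K) := by
  have cf : Continuous f := continuous_iff_continuousAt.2 fun r => (hf r).continuousAt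
  have key : ∀ s ∈ Icc (0:ℝ) 1, ‖f s‖ ^ 2 ≤ M ^ 2 := fun s hs => by
    have : ‖f s‖ ≤ M := (h0 s hs).trans (by nlinarith [hs.2])
    gcongr
  by_cases h : r ≤ 1
  · have := key r ⟨hr.le, h⟩
    have : (0:ℝ) ≤ 4 * (m + 1) + K := by positivity
    linarith
  · push Not at h
    have cj : Continuous fun s => 2 * jr (f s) (f1 s) := by fun_prop
    have ftc := intervalIntegral.integral_eq_sub_of_hasDerivAt (a := 1) (b := r)
      (fun s _ => hda_nsq (hf s)) (cj.intervalIntegrable _ _)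
    have h1 : ∫ s in (1:ℝ)..r, 2 * jr (f s) (f1 s) ≤ ∫ s in (1:ℝ)..r, (‖f s‖ ^ 2 * s + ‖f1 s‖ ^ 2 * s) := by
      apply intervalIntegral.integral_mono_on h.le (cj.intervalIntegrable _ _)
        ((by fun_prop : Continuous _).intervalIntegrable _ _)
      intro s hs
      have := (abs_le.1 (abs_jr_le (f s) (f1 s))).2
      have : 2 * jr (f s) (f1 s) ≤ ‖f s‖ ^ 2 + ‖f1 s‖ ^ 2 := by
        nlinarith [sq_nonneg (‖f s‖ - ‖f1 s‖)]
      have h1 := hs.1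
      nlinarith [sq_nonneg ‖f s‖, sq_nonneg ‖f1 s‖]
    have h2 : ∫ s in (1:ℝ)..r, (‖f s‖ ^ 2 * s + ‖f1 s‖ ^ 2 * s) ≤ 4 * (m + 1) + K := by
      rw [intervalIntegral.integral_of_le h.le]
      calc _ ≤ ∫ s in Ioi 0, (‖f s‖ ^ 2 * s + ‖f1 s‖ ^ 2 * s) := by
            apply setIntegral_mono_set (hi.add hfi)
            · refine (ae_restrict_mem measurableSet_Ioi).mono fun s hs => ?_
              have hs' : 0 ≤ s := le_of_lt hs
              show 0 ≤ ‖f s‖ ^ 2 * s + ‖f1 s‖ ^ 2 * s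
              positivity
            · exact LE.le.eventuallyLE fun s hs => lt_trans zero_lt_one hs.1
        _ = _ := integral_add hi hfi
        _ ≤ _ := by rw [hM]; gcongr
    have := key 1 ⟨zero_le_one, le_rfl⟩
    linarith

lemma V_bd (hM0 : 0 ≤ M) (cf : Continuous f) (h0 : ∀ r ∈ Icc (0:ℝ) 1, ‖f r‖ ≤ M * r)
    (hi : IntegrableOn (fun r => ‖f r‖ ^ 2 * r) (Ioi 0))
    (hM : ∫ r in Ioi 0, ‖f r‖ ^ 2 * r = 4 * (m + 1)) {r : ℝ} (hr : 0 < r) :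
    |((1 + wf m f r) ^ 2 - (1 + m) ^ 2) / r ^ 2| ≤ (2 * m + 2) * (M ^ 2 + (2 * m + 2)) := by
  have hw := wf_le m cf hr.le
  have hw2 := wf_ge m hi hM hr.le
  have e : ((1 + wf m f r) ^ 2 - (1 + m) ^ 2) / r ^ 2 =
    - ((wf m f r + m + 2) * ((m - wf m f r) / r ^ 2)) := by ring
  have hd : (m - wf m f r) / r ^ 2 ≤ M ^ 2 + (2 * m + 2) := by
    rw [div_le_iff₀ (by positivity)]
    by_cases h : r ≤ 1
    · have h1 : ∫ s in (0:ℝ)..r, ‖f s‖ ^ 2 * s ≤ M ^ 2 * r * (r - 0) := by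
        have := intervalIntegral.norm_integral_le_of_norm_le_const (a := 0) (b := r)
          (f := fun s => ‖f s‖ ^ 2 * s) (C := M ^ 2 * r) ?_
        · rw [abs_of_nonneg (by linarith)] at this
          exact (le_abs_self _).trans this
        · intro s hs
          rw [uIoc_of_le hr.le] at hs
          have s0 := hs.1
          have : ‖f s‖ ≤ M := (h0 s ⟨s0.le, hs.2.trans h⟩).trans (by nlinarith [hs.2])
          rw [Real.norm_of_nonneg (by positivity)]
          gcongr
          exact hs.2
      have h2 : (m:ℝ) - wf m f r = (1/2) * ∫ s in (0:ℝ)..r, ‖f s‖ ^ 2 * s := by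
        rw [wf, Atheta]; ring
      rw [h2]
      have : 0 ≤ (2 * (m:ℝ) + 2) * r ^ 2 := by positivity
      nlinarith [sq_nonneg (M * r)]
    · push Not at h
      have : 1 ≤ r ^ 2 := by nlinarith
      have : 0 ≤ M ^ 2 * r ^ 2 := by positivity
      have : (0:ℝ) ≤ (2 * m + 2) := by positivity
      nlinarith
  have hd0 : 0 ≤ (m - wf m f r) / r ^ 2 := div_nonneg (by linarith) (by positivity)
  rw [e, abs_neg, abs_of_nonneg (mul_nonneg (by linarith) hd0)]
  exact mul_le_mul (by linarith) hd hd0 (by positivity)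

end fixed

end

noncomputable section

lemma jr_jm_id (a b : ℂ) : a * ((jr a b : ℂ) + Complex.I * (jm a b : ℂ)) = ((‖a‖ : ℝ) : ℂ) ^ 2 * b := by
  have : ((‖a‖ : ℝ) : ℂ) ^ 2 = ((a.re ^ 2 + a.im ^ 2 : ℝ) : ℂ) := by rw [← nsq]; push_cast; rfl
  rw [this]
  apply Complex.ext
  · simp only [jr, jm, Complex.mul_re, Complex.mul_im, Complex.add_re, Complex.add_im, Complex.I_re,
      Complex.I_im, Complex.ofReal_re, Complex.ofReal_im]; ring
  · simp only [jr, jm, Complex.mul_re, Complex.mul_im, Complex.add_re, Complex.add_im, Complex.I_re,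
      Complex.I_im, Complex.ofReal_re, Complex.ofReal_im]; ring

def V1 (m : ℕ) (F : ℝ × ℝ → ℂ) (t r : ℝ) : ℂ :=
  pr (pr F) (t, r) + ((‖F (t, r)‖ ^ 2 / 2 + wf m (fun s => F (t, s)) r / r ^ 2 : ℝ) : ℂ) * F (t, r)
    - ((wf m (fun s => F (t, s)) r / r : ℝ) : ℂ) * pr F (t, r)

def V2 (m : ℕ) (F : ℝ × ℝ → ℂ) (t r : ℝ) : ℂ :=
  pr (pr (pr F)) (t, r)
    + ((jr (F (t, r)) (pr F (t, r)) - ‖F (t, r)‖ ^ 2 / (2 * r)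
        - 2 * wf m (fun s => F (t, s)) r / r ^ 3 : ℝ) : ℂ) * F (t, r)
    + ((‖F (t, r)‖ ^ 2 + 2 * wf m (fun s => F (t, s)) r / r ^ 2 : ℝ) : ℂ) * pr F (t, r)
    - ((wf m (fun s => F (t, s)) r / r : ℝ) : ℂ) * pr (pr F) (t, r)

def Vt (m : ℕ) (F : ℝ × ℝ → ℂ) (t r : ℝ) : ℂ :=
  pt (pr F) (t, r) - (jm (F (t, r)) (pr F (t, r)) : ℂ) * F (t, r)
    - ((wf m (fun s => F (t, s)) r / r : ℝ) : ℂ) * pt F (t, r)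

abbrev vF (m : ℕ) (F : ℝ × ℝ → ℂ) (t r : ℝ) : ℂ := vf m (fun s => F (t, s)) (fun s => pr F (t, s)) r

variable {m : ℕ} {t0 : ℝ} {F : ℝ × ℝ → ℂ}

lemma CS.hV1 (h : CS m t0 F) {t : ℝ} (ht : t ∈ Ioo t0 0) {r : ℝ} (hr : 0 < r) :
    HasDerivAt (vF m F t) (V1 m F t r) r := by
  have hfr := pr_smooth (oΩ t0) h.smooth
  have d0 := hda_pr (oΩ t0) h.smooth (mΩ ht r)
  have d1 := hda_pr (oΩ t0) hfr (mΩ ht r)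
  have dw := hda_wf m (sect_r h.smooth ht) r
  have dq := (dw.div (hasDerivAt_id r) hr.ne').ofReal_comp
  refine (d1.sub (dq.mul d0)).congr_deriv ?_
  have hrc : (r:ℂ) ≠ 0 := by exact_mod_cast hr.ne'
  simp only [V1, id, Pi.div_apply]; push_cast
  field_simp
  ring

lemma CS.hV2 (h : CS m t0 F) {t : ℝ} (ht : t ∈ Ioo t0 0) {r : ℝ} (hr : 0 < r) :
    HasDerivAt (V1 m F t) (V2 m F t r) r := by
  have hfr := pr_smooth (oΩ t0) h.smooth
  have hfrr := pr_smooth (oΩ t0) hfr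
  have d0 := hda_pr (oΩ t0) h.smooth (mΩ ht r)
  have d1 := hda_pr (oΩ t0) hfr (mΩ ht r)
  have d2 := hda_pr (oΩ t0) hfrr (mΩ ht r)
  have dw := hda_wf m (sect_r h.smooth ht) r
  have dq := (dw.div (hasDerivAt_id r) hr.ne').ofReal_comp
  have dq2 := (((hda_nsq d0).div_const 2).add (dw.div ((hasDerivAt_id r).pow 2) (by simpa using hr.ne'))).ofReal_comp
  refine ((d2.add (dq2.mul d0)).sub (dq.mul d1)).congr_deriv ?_
  have hrc : (r:ℂ) ≠ 0 := by exact_mod_cast hr.ne'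
  simp only [V2, id, Pi.pow_apply, Pi.add_apply, Pi.div_apply]; push_cast
  field_simp
  ring

lemma CS.hVt (h : CS m t0 F) {t : ℝ} (ht : t ∈ Ioo t0 0) {r : ℝ} (hr : 0 < r) :
    HasDerivAt (fun τ => vF m F τ r) (Vt m F t r) t := by
  have hfr := pr_smooth (oΩ t0) h.smooth
  have d0 := hda_pt (oΩ t0) h.smooth (mΩ ht r)
  have d1 := hda_pt (oΩ t0) hfr (mΩ ht r)
  have dw := h.wt ht hr.le
  have dq := (dw.div_const r).ofReal_comp
  refine (d1.sub (dq.mul d0)).congr_deriv ?_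
  have hrc : (r:ℂ) ≠ 0 := by exact_mod_cast hr.ne'
  simp only [Vt]; push_cast
  field_simp
  ring

def Gf (m : ℕ) (F : ℝ × ℝ → ℂ) (t r : ℝ) : ℂ :=
  Complex.I * Vt m F t r + V2 m F t r + (1 / r : ℂ) * V1 m F t r
    - ((((m:ℝ) + 1) ^ 2 / r ^ 2 : ℝ) : ℂ) * vF m F t r

def VV (m : ℕ) (F : ℝ × ℝ → ℂ) (t r : ℝ) : ℝ :=
  ((1 + wf m (fun s => F (t, s)) r) ^ 2 - (1 + m) ^ 2) / r ^ 2 + At m (fun s => F (t, s)) r - ‖F (t, r)‖ ^ 2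

lemma CS.G_eq (h : CS m t0 F) {t : ℝ} (ht : t ∈ Ioo t0 0) {r : ℝ} (hr : 0 < r) :
    Gf m F t r = (VV m F t r : ℂ) * vF m F t r := by
  have hft := pt_smooth (oΩ t0) h.smooth
  have hfr := pr_smooth (oΩ t0) h.smooth
  have hfrr := pr_smooth (oΩ t0) hfr
  have d0 := hda_pr (oΩ t0) h.smooth (mΩ ht r)
  have d1 := hda_pr (oΩ t0) hfr (mΩ ht r)
  have d2 := hda_pr (oΩ t0) hfrr (mΩ ht r)
  have dt := hda_pr (oΩ t0) hft (mΩ ht r)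
  have cf := sect_r h.smooth ht
  have dw := hda_wf m cf r
  obtain ⟨M, hM0, hM⟩ := h.near0 ht.1 ht.2
  have dA := (hda_At (m := m) (M := M) cf (fun s hs => (hM t ⟨le_rfl, le_rfl⟩ s hs).2) (h.int t ht)
    (h.mass t ht) hr).ofReal_comp
  have dq := (dw.div (hasDerivAt_id r) hr.ne').ofReal_comp.pow 2
  have dn := (hda_nsq d0).ofReal_comp
  have di := ((hasDerivAt_id r).inv hr.ne').ofReal_comp
  have dall := (((((dt.const_mul Complex.I).sub (dA.mul d0)).add d2).add (di.mul d1)).sub (dq.mul d0)).add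
    (dn.mul d0)
  have hz : HasDerivAt (fun _ : ℝ => (0:ℂ)) 0 r := hasDerivAt_const r 0
  have hE2 := dall.unique (hz.congr_of_eventuallyEq (by
    filter_upwards [Ioi_mem_nhds hr] with x hx
    have := h.eq t ht x hx
    simp only [Pi.add_apply, Pi.sub_apply, Pi.mul_apply, Pi.pow_apply]
    rw [← this]
    simp [one_div]))
  have hE1 := h.eq t ht r hr
  have hsym := pt_pr (oΩ t0) h.smooth (mΩ ht r)
  have hid := jr_jm_id (F (t, r)) (pr F (t, r))
  simp only [Gf, VV, Vt, V1, V2, vf, vF, hsym]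
  simp only [id, Pi.pow_apply, Pi.div_apply, Pi.inv_apply] at hE2
  push_cast at hE1 hE2 ⊢
  set w : ℂ := ((wf m (fun s => F (t, s)) r : ℝ) : ℂ)
  have hrc : (r:ℂ) ≠ 0 := by exact_mod_cast hr.ne'
  have hr2 : (r:ℂ) * (r:ℂ)⁻¹ = 1 := mul_inv_cancel₀ hrc
  have hr3 : (r:ℂ) ^ 2 * (r:ℂ)⁻¹ ^ 2 = 1 := by rw [← mul_pow, hr2, one_pow]
  linear_combination hE2 - (w / r) * hE1 - hid
    - (F (t, r) * w * (r:ℂ)⁻¹ * ((‖F (t, r)‖ : ℝ) : ℂ) ^ 2) * hr3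

end

noncomputable section
variable {m : ℕ} {t0 : ℝ} {F : ℝ × ℝ → ℂ}

lemma lint_exp (g : ℝ → ℂ) : ∫⁻ x, ENNReal.ofReal (‖g (Real.exp x)‖ ^ 2 * Real.exp (2 * x)) =
    ∫⁻ r in Ioi 0, ENNReal.ofReal (‖g r‖ ^ 2 * r) := by
  have h := lintegral_image_eq_lintegral_abs_deriv_mul (s := univ) (f := Real.exp) (f' := Real.exp)
    MeasurableSet.univ (fun x _ => (Real.hasDerivAt_exp x).hasDerivWithinAt)
    (Real.exp_injective.injOn) (fun r => ENNReal.ofReal (‖g r‖ ^ 2 * r))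
  rw [image_univ, Real.range_exp] at h
  rw [h, Measure.restrict_univ]
  congr 1; funext x
  rw [abs_of_pos (Real.exp_pos x), ← ENNReal.ofReal_mul (Real.exp_pos x).le]
  congr 1
  rw [two_mul x, Real.exp_add]; ring

def clp (a b t : ℝ) : ℝ := max a (min t b)

lemma clp_cont (a b : ℝ) : Continuous (clp a b) := by unfold clp; fun_prop
lemma clp_mem {a b : ℝ} (hab : a ≤ b) (t : ℝ) : clp a b t ∈ Icc a b :=
  ⟨le_max_left _ _, max_le hab (min_le_right _ _)⟩
lemma clp_eq {a b t : ℝ} (ht : t ∈ Icc a b) : clp a b t = t := by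
  rw [clp, min_eq_left ht.2, max_eq_right ht.1]

lemma CS.mass_bd (h : CS m t0 F) {a b : ℝ} (ha : t0 < a) (hb : b < 0) :
    ∃ K, 0 ≤ K ∧ ∀ t ∈ Icc a b, ∫⁻ r in Ioi 0, ENNReal.ofReal (‖vF m F t r‖ ^ 2 * r) ≤ ENNReal.ofReal K := by
  obtain ⟨M, hM0, hM⟩ := h.near0 ha hb
  obtain ⟨K, hK⟩ := h.h1 a b ha hb
  refine ⟨max (2 * K + 2 * (m + 2) ^ 2 * (M ^ 2 + 4 * (m + 1))) 0, le_max_right _ _, fun t ht => ?_⟩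
  have hI : t ∈ Ioo t0 0 := ⟨ha.trans_le ht.1, ht.2.trans_lt hb⟩
  exact (vf_lint (sect_r h.smooth hI) (fun r hr => (hM t ht r hr).2) (h.int t hI) (h.mass t hI)
    (hK t ht).1 (hK t ht).2).trans (ENNReal.ofReal_le_ofReal (le_max_left _ _))

/-- composition of a continuous function on `Ω` with clamped time and exponential radius. -/
lemma cont_cl {f : ℝ × ℝ → ℂ} {a b : ℝ} (ha : t0 < a) (hb : b < 0) (hab : a ≤ b)
    (hf : ContDiffOn ℝ (⊤ : ℕ∞) f (Ioo t0 0 ×ˢ univ)) :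
    Continuous fun p : ℝ × ℝ => f (clp a b p.1, p.2) := by
  apply hf.continuousOn.comp_continuous
  · exact ((clp_cont a b).comp continuous_fst).prodMk continuous_snd
  · intro p
    have := clp_mem hab p.1
    exact ⟨⟨ha.trans_le this.1, this.2.trans_lt hb⟩, trivial⟩

lemma CS.cont_w (h : CS m t0 F) {a b : ℝ} (ha : t0 < a) (hb : b < 0) (hab : a ≤ b) :
    Continuous fun p : ℝ × ℝ => wf m (fun s => F (clp a b p.1, s)) p.2 := by
  have c := cont_cl ha hb hab h.smooth
  unfold wf Atheta
  refine continuous_const.add (continuous_const.mul ?_)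
  apply intervalIntegral.continuous_parametric_intervalIntegral_of_continuous (s := fun p : ℝ × ℝ => p.2)
  · have : Continuous fun q : (ℝ × ℝ) × ℝ => F (clp a b q.1.1, q.2) :=
      c.comp (by fun_prop : Continuous fun q : (ℝ × ℝ) × ℝ => (q.1.1, q.2))
    exact (this.norm.pow 2).mul continuous_snd
  · exact continuous_snd

set_option maxHeartbeats 1000000 in
theorem CS.energy (h : CS m t0 F) {s : ℝ} (hs : s ∈ Ioo t0 0) :
    ∃ KE, 0 ≤ KE ∧ ∀ T, s ≤ T → T < 0 →
      ∫⁻ r in Ioi 0, ENNReal.ofReal (‖vF m F T r‖ ^ 2 * r) ≤ ENNReal.ofReal KE := by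
  obtain ⟨KE, hKE0, hKE⟩ := h.mass_bd hs.1 (b := s / 2) (by linarith [hs.2])
  refine ⟨KE, hKE0, fun T hsT hT => ?_⟩
  have hs2 : s < s / 2 := by linarith [hs.2]
  set b := T / 2 with hb
  have hTb : T < b := by linarith
  have hb0 : b < 0 := by linarith
  have hsb : s ≤ b := by linarith
  have hsub : ∀ t ∈ Icc s b, t ∈ Ioo t0 0 := fun t ht => ⟨hs.1.trans_le ht.1, ht.2.trans_lt hb0⟩
  set c := clp s b with hc
  have hcI : ∀ t, c t ∈ Ioo t0 0 := fun t => hsub _ (clp_mem hsb t)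
  obtain ⟨M, hM0, hM⟩ := h.near0 hs.1 hb0
  obtain ⟨K, hK0, hK⟩ := h.mass_bd hs.1 hb0
  obtain ⟨Ku, hKu⟩ := h.h1 s b hs.1 hb0
  set KU := max Ku 0
  have hfr := pr_smooth (oΩ t0) h.smooth
  have hfrr := pr_smooth (oΩ t0) hfr
  have hfrrr := pr_smooth (oΩ t0) hfrr
  have hft := pt_smooth (oΩ t0) h.smooth
  have hfrt := pt_smooth (oΩ t0) hfr
  have ex : Continuous fun p : ℝ × ℝ => (p.1, Real.exp p.2) := by fun_prop
  have q0 := (cont_cl hs.1 hb0 hsb h.smooth).comp ex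
  have q1 := (cont_cl hs.1 hb0 hsb hfr).comp ex
  have q2 := (cont_cl hs.1 hb0 hsb hfrr).comp ex
  have q3 := (cont_cl hs.1 hb0 hsb hfrrr).comp ex
  have q4 := (cont_cl hs.1 hb0 hsb hft).comp ex
  have q5 := (cont_cl hs.1 hb0 hsb hfrt).comp ex
  have qw := (h.cont_w hs.1 hb0 hsb).comp ex
  have qe : Continuous fun p : ℝ × ℝ => Real.exp p.2 := by fun_prop
  have en : ∀ p : ℝ × ℝ, Real.exp p.2 ≠ 0 := fun p => (Real.exp_pos _).ne'
  have en2 : ∀ p : ℝ × ℝ, Real.exp p.2 ^ 2 ≠ 0 := fun p => pow_ne_zero _ (en p)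
  have en3 : ∀ p : ℝ × ℝ, Real.exp p.2 ^ 3 ≠ 0 := fun p => pow_ne_zero _ (en p)
  have en4 : ∀ p : ℝ × ℝ, 2 * Real.exp p.2 ≠ 0 := fun p => mul_ne_zero two_ne_zero (en p)
  have qec : Continuous fun p : ℝ × ℝ => ((Real.exp p.2 : ℝ) : ℂ) := Complex.continuous_ofReal.comp qe
  have qr := Complex.continuous_ofReal.comp (qw.div qe en)
  have cv : Continuous fun p : ℝ × ℝ => vF m F (c p.1) (Real.exp p.2) := q1.sub (qr.mul q0)
  have cV1 : Continuous fun p : ℝ × ℝ => V1 m F (c p.1) (Real.exp p.2) :=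
    (q2.add ((Complex.continuous_ofReal.comp (((q0.norm.pow 2).div_const 2).add
      (qw.div (qe.pow 2) en2))).mul q0)).sub (qr.mul q1)
  have cV2 : Continuous fun p : ℝ × ℝ => V2 m F (c p.1) (Real.exp p.2) :=
    ((q3.add ((Complex.continuous_ofReal.comp (((cont_jr q0 q1).sub ((q0.norm.pow 2).div
      (continuous_const.mul qe) en4)).sub ((continuous_const.mul qw).div (qe.pow 3) en3))).mul q0)).add
      ((Complex.continuous_ofReal.comp ((q0.norm.pow 2).add ((continuous_const.mul qw).div (qe.pow 2)
        en2))).mul q1)).sub (qr.mul q2)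
  have cVt : Continuous fun p : ℝ × ℝ => Vt m F (c p.1) (Real.exp p.2) :=
    (q5.sub ((Complex.continuous_ofReal.comp (cont_jm q0 q1)).mul q0)).sub (qr.mul q4)
  have cG : Continuous fun p : ℝ × ℝ => Gf m F (c p.1) (Real.exp p.2) :=
    (((continuous_const.mul cVt).add cV2).add ((continuous_const.div qec
      (fun p => by exact_mod_cast en p)).mul cV1)).sub
      ((Complex.continuous_ofReal.comp (continuous_const.div (qe.pow 2) en2)).mul cv)
  set C : ℝ := (2 * m + 2) * (M ^ 2 + (2 * m + 2)) + (m + 2) * (M ^ 2 + 4 * (m + 1)) +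
    (M ^ 2 + (4 * (m + 1) + KU)) with hC
  have hC0 : 0 ≤ C := by positivity
  have hVV : ∀ t ∈ Icc s b, ∀ r, 0 < r → |VV m F t r| ≤ C := by
    intro t ht r hr
    have hI := hsub t ht
    have cf := sect_r h.smooth hI
    have h0 := fun r hr => (hM t ht r hr).2
    have b1 := V_bd hM0 cf h0 (h.int t hI) (h.mass t hI) hr
    have b2 := At_abs cf h0 (h.int t hI) (h.mass t hI) hr.le
    have b3 := sup_bd hM0 (fun x => hda_pr (oΩ t0) h.smooth (mΩ hI x)) (sect_r hfr hI) h0 (h.int t hI)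
      (h.mass t hI) (le_max_right Ku 0) (hKu t ht).1 ((hKu t ht).2.trans (le_max_left _ _)) hr
    have b4 : |‖F (t, r)‖ ^ 2| ≤ M ^ 2 + (4 * (m + 1) + KU) := by
      rw [abs_of_nonneg (by positivity)]; exact b3
    exact (abs_sub _ _).trans (add_le_add ((abs_add_le _ _).trans (add_le_add b1 b2)) b4)
  have fin := energy_abs (s := s) (T := T) (T1 := b) (k := (m:ℝ) + 1) (C := C) (M := M + (m + 2) * M) (K := K)
    (s1 := s / 2) (K1 := ENNReal.ofReal KE) hsT hTb hs2
    (v := fun t x => vF m F (c t) (Real.exp x))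
    (v1 := fun t x => (Real.exp x : ℂ) * V1 m F (c t) (Real.exp x))
    (v2 := fun t x => (Real.exp x : ℂ) * V1 m F (c t) (Real.exp x)
      + (Real.exp x : ℂ) * ((Real.exp x : ℂ) * V2 m F (c t) (Real.exp x)))
    (vt := fun t x => Vt m F (c t) (Real.exp x))
    (g := fun t x => Gf m F (c t) (Real.exp x))
    cv (qec.mul cV1) ((qec.mul cV1).add (qec.mul (qec.mul cV2))) cVt cG
    ?_ ?_ ?_ ?_ hC0 ?_ ?_ ?_ hK0 ?_ ?_
  · have := lint_exp (vF m F (c T))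
    simp only [nE] at fin
    rw [this, hc, clp_eq ⟨hsT, hTb.le⟩] at fin
    exact fin
  · intro t x
    have := (h.hV1 (hcI t) (Real.exp_pos x)).scomp x (Real.hasDerivAt_exp x)
    refine HasDerivAt.congr_deriv this ?_
    simp
  · intro t x
    have h1 := (h.hV2 (hcI t) (Real.exp_pos x)).scomp x (Real.hasDerivAt_exp x)
    have h2 := (Real.hasDerivAt_exp x).ofReal_comp.mul h1
    refine h2.congr_deriv ?_
    simp
  · intro t ht t' ht' x
    have hsu : uIcc t t' ⊆ Icc s b := (convex_Icc s b).ordConnected.uIcc_subset ht ht'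
    rw [hc, clp_eq ht, clp_eq ht']
    have e : ∫ τ in t..t', Vt m F (clp s b τ) (Real.exp x) = ∫ τ in t..t', Vt m F τ (Real.exp x) := by
      apply intervalIntegral.integral_congr
      intro τ hτ
      simp only [clp_eq (hsu hτ)]
    rw [e]
    apply intervalIntegral.integral_eq_sub_of_hasDerivAt
      (fun τ hτ => h.hVt (hsub τ (hsu hτ)) (Real.exp_pos x))
    have i1 : IntervalIntegrable (fun τ => Vt m F (c τ) (Real.exp x)) volume t t' :=
      (cVt.comp (by fun_prop : Continuous fun τ : ℝ => (τ, x))).intervalIntegrable _ _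
    refine i1.congr ?_
    intro τ hτ
    simp only [hc]
    rw [clp_eq (hsu (uIoc_subset_uIcc hτ))]
  · intro t x
    have hx : (Real.exp x : ℂ) ≠ 0 := by exact_mod_cast (Real.exp_pos x).ne'
    have e2 : (Real.exp (2 * x) : ℂ) = (Real.exp x : ℂ) ^ 2 := by
      rw [two_mul, Real.exp_add]; push_cast; ring
    simp only [Gf]
    rw [e2]
    push_cast at hx ⊢
    field_simp
    ring
  · intro t x
    rw [h.G_eq (hcI t) (Real.exp_pos x), norm_mul, Complex.norm_real, Real.norm_eq_abs]
    gcongr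
    exact hVV _ (clp_mem hsb t) _ (Real.exp_pos x)
  · intro t x
    rw [h.G_eq (hcI t) (Real.exp_pos x)]
    simp [jm]; ring
  · intro t x hx
    have hex : Real.exp x ∈ Icc (0:ℝ) 1 := ⟨(Real.exp_pos x).le, Real.exp_le_one_iff.2 hx⟩
    obtain ⟨b1, b2⟩ := hM (c t) (clp_mem hsb t) _ hex
    refine (norm_sub_le _ _).trans (add_le_add b1 ?_)
    rw [norm_mul, Complex.norm_real, Real.norm_eq_abs, abs_div, abs_of_pos (Real.exp_pos x)]
    have hw := wf_abs m (sect_r h.smooth (hcI t)) (h.int _ (hcI t)) (h.mass _ (hcI t)) hex.1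
    have e0 := Real.exp_pos x
    calc _ ≤ (m + 2) / Real.exp x * (M * Real.exp x) := by gcongr
      _ = _ := by field_simp
  · intro t
    have := lint_exp (vF m F (c t))
    simp only [nE]
    rw [this]
    exact hK _ (clp_mem hsb t)
  · intro t ht
    have := lint_exp (vF m F (c t))
    simp only [nE]
    rw [this]
    apply hKE
    exact ⟨(clp_mem hsb t).1, max_le hs2.le ((min_le_left _ _).trans ht.2)⟩

end

noncomputable section

variable {m : ℕ} {t0 : ℝ} {F : ℝ × ℝ → ℂ}

lemma Atheta_congr {f g : ℝ → ℂ} (h : ∀ r, 0 < r → f r = g r) {r : ℝ} (hr : 0 ≤ r) :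
    Atheta f r = Atheta g r := by
  unfold Atheta
  congr 1
  apply intervalIntegral.integral_congr_ae
  refine Eventually.of_forall fun s hs => ?_
  rw [uIoc_of_le hr] at hs
  simp only [h s hs.1]

lemma At_congr {f g : ℝ → ℂ} (h : ∀ r, 0 < r → f r = g r) {r : ℝ} (hr : 0 ≤ r) :
    At m f r = At m g r := by
  unfold At
  congr 1
  refine setIntegral_congr_fun measurableSet_Ioi fun s hs => ?_
  have hs0 : 0 < s := hr.trans_lt hs
  simp only [h s hs0, Atheta_congr h hs0.le]

lemma U_zero (hm : 1 ≤ m) {U : ℝ × ℝ → ℂ} {u : ℝ → ℂ} (cU : Continuous U)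
    (h : ∀ x : ℝ × ℝ, x ≠ 0 → U x = u (Real.sqrt (x.1 ^ 2 + x.2 ^ 2)) *
        (((x.1 : ℂ) + (x.2 : ℂ) * Complex.I) / ((Real.sqrt (x.1 ^ 2 + x.2 ^ 2) : ℝ) : ℂ)) ^ m) :
    U (0, 0) = 0 := by
  have hp : ∀ θ r : ℝ, 0 < r → U (r * Real.cos θ, r * Real.sin θ) =
      u r * Complex.exp (θ * Complex.I) ^ m := by
    intro θ r hr
    have e : (r * Real.cos θ) ^ 2 + (r * Real.sin θ) ^ 2 = r ^ 2 := by
      have := Real.cos_sq_add_sin_sq θ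
      linear_combination r ^ 2 * this
    have hne : ((r * Real.cos θ, r * Real.sin θ) : ℝ × ℝ) ≠ 0 := by
      intro h0
      have h1 := congrArg Prod.fst h0
      have h2 := congrArg Prod.snd h0
      simp only [Prod.fst_zero, Prod.snd_zero] at h1 h2
      rw [h1, h2] at e
      have : 0 < r ^ 2 := by positivity
      linarith
    rw [h _ hne]
    simp only [e, Real.sqrt_sq hr.le]
    congr 2
    rw [Complex.exp_mul_I]
    have : (r : ℂ) ≠ 0 := by exact_mod_cast hr.ne'
    push_cast
    field_simp
  have hl : ∀ θ : ℝ, Tendsto (fun r : ℝ => U (r * Real.cos θ, r * Real.sin θ)) (nhdsWithin 0 (Ioi 0))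
      (nhds (U (0, 0))) := by
    intro θ
    have c : Continuous (fun r : ℝ => U (r * Real.cos θ, r * Real.sin θ)) := by fun_prop
    have := c.tendsto 0
    simp only [zero_mul] at this
    exact this.mono_left nhdsWithin_le_nhds
  have h0 := hl 0
  have h1 := hl (Real.pi / m)
  have e1 : (Complex.exp (((Real.pi / m : ℝ) : ℂ) * Complex.I)) ^ m = -1 := by
    rw [← Complex.exp_nat_mul]
    have : (m : ℂ) ≠ 0 := by exact_mod_cast (by omega : m ≠ 0)
    rw [← Complex.exp_pi_mul_I]
    congr 1
    push_cast
    field_simp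
  have h2 : Tendsto (fun r : ℝ => U (r * Real.cos 0, r * Real.sin 0)) (nhdsWithin 0 (Ioi 0))
      (nhds (- U (0, 0))) := by
    refine (h1.neg).congr' ?_
    filter_upwards [self_mem_nhdsWithin] with r hr
    rw [hp _ r hr, hp _ r hr, e1]
    simp
  have := tendsto_nhds_unique h0 h2
  have h3 : 2 * U (0, 0) = 0 := by linear_combination this
  simpa using h3

lemma build (m : ℕ) (hm : 1 ≤ m) (u : ℝ → ℝ → ℂ)
    (hu : IsCSS m (Set.Ioo (-1 : ℝ) 0) u)
    (hmass : ∀ t ∈ Set.Ioo (-1 : ℝ) 0, L2sq (u t) = 8 * Real.pi * (m + 1))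
    (hblow : Tendsto
      (fun t => Real.sqrt (2 * Real.pi * ∫ r in Set.Ioi (0:ℝ), ‖deriv (u t) r‖ ^ 2 * r))
      (nhdsWithin 0 (Set.Ioo (-1 : ℝ) 0)) atTop) :
    ∃ t0 : ℝ, ∃ F : ℝ × ℝ → ℂ, t0 < 0 ∧ -1 ≤ t0 ∧ CS m t0 F ∧
      ∀ t ∈ Ioo t0 0, ∀ r, 0 < r → u t r = F (t, r) ∧ deriv (u t) r = pr F (t, r) := by
  have ev := hblow.eventually (eventually_gt_atTop 0)
  rw [eventually_nhdsWithin_iff, Metric.eventually_nhds_iff] at ev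
  obtain ⟨ε, hε, hev⟩ := ev
  set t0 : ℝ := max (-1) (-ε) with ht0
  have ht00 : t0 < 0 := max_lt (by norm_num) (by linarith)
  have sub1 : ∀ t ∈ Ioo t0 0, t ∈ Ioo (-1:ℝ) 0 := fun t ht => ⟨(le_max_left _ _).trans_lt ht.1, ht.2⟩
  have hint : ∀ t ∈ Ioo t0 0, IntegrableOn (fun r => ‖deriv (u t) r‖ ^ 2 * r) (Ioi 0) := by
    intro t ht
    have h1 := hev (y := t) (by
      rw [Real.dist_eq, sub_zero, abs_of_neg ht.2]
      have := (le_max_right (-1) (-ε)).trans_lt ht.1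
      linarith) (sub1 t ht)
    by_contra hni
    rw [integral_undef hni] at h1
    simp at h1
  obtain ⟨U, hU, hUe⟩ := hu.equivariant
  set F : ℝ × ℝ → ℂ := fun p => U p.1 (p.2, 0) with hF
  have hsm : ContDiffOn ℝ (⊤ : ℕ∞) F (Ioo t0 0 ×ˢ univ) := by
    have : ContDiff ℝ (⊤ : ℕ∞) (fun p : ℝ × ℝ => ((p.1, (p.2, 0)) : ℝ × (ℝ × ℝ))) := by fun_prop
    exact hU.comp this.contDiffOn fun p hp => ⟨sub1 _ hp.1, trivial⟩
  have hFu : ∀ t ∈ Ioo t0 0, ∀ r, 0 < r → u t r = F (t, r) := by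
    intro t ht r hr
    have hrc : (r : ℂ) ≠ 0 := by exact_mod_cast hr.ne'
    have := hUe t (sub1 t ht) (r, 0) (by simp [Prod.ext_iff, hr.ne'])
    simp only [hF, this]
    simp [Real.sqrt_sq hr.le, hrc]
  have hd1 : ∀ t ∈ Ioo t0 0, ∀ r, 0 < r → deriv (u t) r = pr F (t, r) := by
    intro t ht r hr
    have : u t =ᶠ[nhds r] fun s => F (t, s) := by
      filter_upwards [Ioi_mem_nhds hr] with s hs using hFu t ht s hs
    rw [this.deriv_eq]
    exact (hda_pr (oΩ t0) hsm (mΩ ht r)).deriv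
  have hd2 : ∀ t ∈ Ioo t0 0, ∀ r, 0 < r → deriv (deriv (u t)) r = pr (pr F) (t, r) := by
    intro t ht r hr
    have : deriv (u t) =ᶠ[nhds r] fun s => pr F (t, s) := by
      filter_upwards [Ioi_mem_nhds hr] with s hs using hd1 t ht s hs
    rw [this.deriv_eq]
    exact (hda_pr (oΩ t0) (pr_smooth (oΩ t0) hsm) (mΩ ht r)).deriv
  have hdt : ∀ t ∈ Ioo t0 0, ∀ r, 0 < r → deriv (fun s => u s r) t = pt F (t, r) := by
    intro t ht r hr
    have : (fun s => u s r) =ᶠ[nhds t] fun s => F (s, r) := by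
      filter_upwards [Ioo_mem_nhds ht.1 ht.2] with s hs using hFu s hs r hr
    rw [this.deriv_eq]
    exact (hda_pt (oΩ t0) hsm (mΩ ht r)).deriv
  have hz : ∀ t ∈ Ioo t0 0, F (t, 0) = 0 := by
    intro t ht
    have cU : Continuous (U t) := by
      have := hU.continuousOn.comp_continuous (f := fun x : ℝ × ℝ => (t, x)) (by fun_prop)
        (fun x => ⟨sub1 t ht, trivial⟩)
      exact this
    exact U_zero hm cU (hUe t (sub1 t ht))
  have hi : ∀ t ∈ Ioo t0 0, IntegrableOn (fun r => ‖F (t, r)‖ ^ 2 * r) (Ioi 0) := by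
    intro t ht
    refine (hu.integrable t (sub1 t ht)).congr_fun (fun r hr => ?_) measurableSet_Ioi
    simp only [hFu t ht r hr]
  have hi1 : ∀ t ∈ Ioo t0 0, IntegrableOn (fun r => ‖pr F (t, r)‖ ^ 2 * r) (Ioi 0) := by
    intro t ht
    refine (hint t ht).congr_fun (fun r hr => ?_) measurableSet_Ioi
    simp only [hd1 t ht r hr]
  refine ⟨t0, F, ht00, le_max_left _ _, ⟨hsm, hz, hi, ?_, ?_, ?_⟩, fun t ht r hr =>
    ⟨hFu t ht r hr, hd1 t ht r hr⟩⟩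
  · intro t ht
    have := hmass t (sub1 t ht)
    rw [L2sq, setIntegral_congr_fun (g := fun r => ‖F (t, r)‖ ^ 2 * r) measurableSet_Ioi
      (fun r hr => by simp only [hFu t ht r hr])] at this
    have hpi := Real.pi_pos
    have : (2 * Real.pi) * (∫ r in Ioi 0, ‖F (t, r)‖ ^ 2 * r) = (2 * Real.pi) * (4 * (m + 1)) := by
      rw [this]; ring
    exact mul_left_cancel₀ (by positivity) this
  · intro t ht r hr
    have := hu.eq t (sub1 t ht) r hr
    rw [CSSeq, hdt t ht r hr, hd2 t ht r hr, hd1 t ht r hr, At_congr (hFu t ht) hr.le,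
      Atheta_congr (hFu t ht) hr.le, hFu t ht r hr] at this
    exact this
  · intro a b ha hb
    have hsub : ∀ t ∈ Icc a b, t ∈ Ioo t0 0 := fun t ht => ⟨ha.trans_le ht.1, ht.2.trans_lt hb⟩
    obtain ⟨C, hC⟩ := hu.bounded (Icc a b) (fun t ht => sub1 t (hsub t ht)) isCompact_Icc
    refine ⟨C ^ 2 / (2 * Real.pi), fun t ht => ⟨hi1 t (hsub t ht), ?_⟩⟩
    have hI := hsub t ht
    have hpi := Real.pi_pos
    have h1 := hC t ht
    have h2 : Real.sqrt (H1msq m (u t)) ≤ C := by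
      have := Real.sqrt_nonneg (L2sq (u t)); linarith
    have h3 : H1msq m (u t) ≤ C ^ 2 := by
      rw [Real.sqrt_le_iff] at h2; exact h2.2
    rw [le_div_iff₀' (by positivity)]
    refine le_trans ?_ h3
    rw [H1msq]
    refine mul_le_mul_of_nonneg_left ?_ (by positivity)
    have c1 := sect_r hsm hI
    have c2 := sect_r (pr_smooth (oΩ t0) hsm) hI
    obtain ⟨M, hM⟩ := (isCompact_Icc (a := (0:ℝ)) (b := 1)).exists_bound_of_continuousOn c2.continuousOn
    have h0 : ∀ r ∈ Icc (0:ℝ) 1, ‖F (t, r)‖ ≤ M * r := by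
      intro r hr
      have := (convex_Icc (0:ℝ) 1).norm_image_sub_le_of_norm_hasDerivWithin_le
        (f := fun s => F (t, s)) (f' := fun s => pr F (t, s)) (C := M)
        (fun x _ => (hda_pr (oΩ t0) hsm (mΩ hI x)).hasDerivWithinAt)
        (fun x hx => hM x hx) (left_mem_Icc.2 zero_le_one) hr
      simpa [hz t hI, abs_of_nonneg hr.1] using this
    have hdiv : IntegrableOn (fun r => ‖F (t, r)‖ ^ 2 / r) (Ioi 0) := by
      refine Integrable.mono' (dm_int M (hi t hI)) ?_ ?_
      · refine ContinuousOn.aestronglyMeasurable ?_ measurableSet_Ioi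
        exact ((c1.norm.pow 2).continuousOn).div continuousOn_id fun x hx => (ne_of_gt hx)
      · refine (ae_restrict_iff' measurableSet_Ioi).2 (Eventually.of_forall fun r hr => ?_)
        have hr0 : 0 < r := hr
        rw [Real.norm_of_nonneg (by positivity)]
        exact div_le_dm (f := fun s => F (t, s)) h0 hr
    have hint2 : IntegrableOn (fun r => (‖deriv (u t) r‖ ^ 2 + (m : ℝ) ^ 2 * ‖u t r‖ ^ 2 / r ^ 2) * r)
        (Ioi 0) := by
      refine (((hi1 t hI).add (hdiv.const_mul ((m:ℝ) ^ 2)))).congr_fun (fun r hr => ?_) measurableSet_Ioi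
      have hr0 : r ≠ 0 := ne_of_gt hr
      simp only [Pi.add_apply, hd1 t hI r hr, hFu t hI r hr]
      field_simp
    refine setIntegral_mono_on (hi1 t hI) hint2 measurableSet_Ioi fun r hr => ?_
    have hr0 : 0 < r := hr
    rw [hd1 t hI r hr]
    refine mul_le_mul_of_nonneg_right ?_ hr0.le
    have : 0 ≤ (m : ℝ) ^ 2 * ‖u t r‖ ^ 2 / r ^ 2 := by positivity
    linarith

end

noncomputable section

lemma virial_bd (m : ℕ) {f f1 : ℝ → ℂ} {R ρ η δ KE : ℝ} {φ : ℝ → ℝ} (hR : 0 < R) (hδ : 0 < δ)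
    (hφ : ∀ x : ℝ, 0 ≤ x → φ x ∈ Set.Icc (0:ℝ) 1) (hφ2 : ∀ x : ℝ, 2 ≤ x → φ x = 0)
    (hi : IntegrableOn (fun r => ‖f r‖ ^ 2 * r) (Ioi 0))
    (hM : ∫ r in Ioi 0, ‖f r‖ ^ 2 * r = 4 * (m + 1))
    (hv : IntegrableOn (fun r => ‖vf m f f1 r‖ ^ 2 * r) (Ioi 0))
    (hv2 : ∫ r in Ioi 0, ‖vf m f f1 r‖ ^ 2 * r ≤ KE)
    (hρ : 0 < ρ) (hη : ∫ r in Ioi ρ, ‖f r‖ ^ 2 * r ≤ η) :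
    |∫ r in Ioi 0, φ (r / R) * ((starRingEnd ℂ) (f r) * ((r : ℂ) * f1 r)).im * r| ≤
      δ / 2 * KE + (1 / (2 * δ)) * (ρ ^ 2 * (4 * (m + 1)) + 4 * R ^ 2 * η) := by
  set g : ℝ → ℝ := fun r => ‖f r‖ ^ 2 * r with hg
  have hi2 : IntegrableOn ((Ioi ρ).indicator g) (Ioi 0) :=
    hi.indicator measurableSet_Ioi
  have hI : Integrable (fun r => δ / 2 * (‖vf m f f1 r‖ ^ 2 * r) + (1 / (2 * δ)) *
      (ρ ^ 2 * g r + 4 * R ^ 2 * (Ioi ρ).indicator g r)) (volume.restrict (Ioi 0)) :=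
    (hv.const_mul _).add (((hi.const_mul _).add (hi2.const_mul _)).const_mul _)
  have key := norm_integral_le_of_norm_le (μ := volume.restrict (Ioi 0))
    (f := fun r => φ (r / R) * ((starRingEnd ℂ) (f r) * ((r : ℂ) * f1 r)).im * r) hI ?_
  · rw [Real.norm_eq_abs] at key
    refine key.trans ?_
    have j1 : Integrable (fun r => (1 / (2 * δ)) *
      (ρ ^ 2 * g r + 4 * R ^ 2 * (Ioi ρ).indicator g r)) (volume.restrict (Ioi 0)) :=
      ((hi.const_mul _).add (hi2.const_mul _)).const_mul _
    rw [integral_add (hv.const_mul _) j1,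
      integral_const_mul, integral_const_mul, integral_add (hi.const_mul _) (hi2.const_mul _),
      integral_const_mul, integral_const_mul, hM, setIntegral_indicator measurableSet_Ioi,
      inter_eq_right.2 (Ioi_subset_Ioi hρ.le)]
    gcongr
  · refine (ae_restrict_iff' measurableSet_Ioi).2 (Eventually.of_forall fun r hr => ?_)
    have hr0 : 0 < r := hr
    have e : ((starRingEnd ℂ) (f r) * ((r : ℂ) * f1 r)).im = r * jm (f r) (vf m f f1 r) := by
      rw [← jm_add_smul (f r) (vf m f f1 r) (wf m f r / r), ← f1_eq]
      simp [jm]; ring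
    rw [e]
    set v := vf m f f1 r
    have hj : |jm (f r) v| ≤ ‖f r‖ * ‖v‖ := by
      rw [← Real.sqrt_sq (norm_nonneg (f r)), ← Real.sqrt_sq (norm_nonneg v),
        ← Real.sqrt_mul (by positivity)]
      apply Real.abs_le_sqrt
      rw [nsq, nsq, jm]
      nlinarith [sq_nonneg ((f r).re * v.re + (f r).im * v.im)]
    obtain ⟨p0, p1⟩ := hφ (r / R) (by positivity)
    rw [Real.norm_eq_abs, abs_mul, abs_mul, abs_mul, abs_of_nonneg p0, abs_of_pos hr0]
    have main : φ (r / R) * (r * ‖f r‖) * ‖v‖ ≤ δ / 2 * ‖v‖ ^ 2 + (1 / (2 * δ)) * (φ (r / R) * (r * ‖f r‖)) ^ 2 := by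
      have : 0 ≤ (1 / (2 * δ)) * (δ * ‖v‖ - φ (r / R) * (r * ‖f r‖)) ^ 2 := by positivity
      have e2 : (1 / (2 * δ)) * (δ * ‖v‖ - φ (r / R) * (r * ‖f r‖)) ^ 2 = δ / 2 * ‖v‖ ^ 2
        + (1 / (2 * δ)) * (φ (r / R) * (r * ‖f r‖)) ^ 2 - φ (r / R) * (r * ‖f r‖) * ‖v‖ := by
        field_simp; ring
      linarith
    have m2 : (φ (r / R) * (r * ‖f r‖)) ^ 2 * r ≤ ρ ^ 2 * g r + 4 * R ^ 2 * (Ioi ρ).indicator g r := by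
      have gn : 0 ≤ g r := by simp only [hg]; positivity
      have e3 : (φ (r / R) * (r * ‖f r‖)) ^ 2 * r = (φ (r / R)) ^ 2 * r ^ 2 * g r := by
        simp only [hg]; ring
      rw [e3]
      have pp : φ (r / R) ^ 2 ≤ 1 := by nlinarith
      by_cases h1 : ρ < r
      · rw [indicator_of_mem (show r ∈ Ioi ρ from h1)]
        by_cases h2 : 2 * R ≤ r
        · rw [hφ2 (r / R) (by rw [le_div_iff₀ hR]; exact h2)]
          have : 0 ≤ ρ ^ 2 * g r + 4 * R ^ 2 * g r := by positivity
          simpa using this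
        · have h3 : r ^ 2 ≤ 4 * R ^ 2 := by nlinarith
          have h4 : φ (r / R) ^ 2 * r ^ 2 ≤ 4 * R ^ 2 := by nlinarith [sq_nonneg r]
          have := mul_le_mul_of_nonneg_right h4 gn
          have : 0 ≤ ρ ^ 2 * g r := by positivity
          linarith
      · have h3 : r ^ 2 ≤ ρ ^ 2 := by nlinarith
        have h4 : φ (r / R) ^ 2 * r ^ 2 ≤ ρ ^ 2 := by nlinarith [sq_nonneg r]
        have := mul_le_mul_of_nonneg_right h4 gn
        rw [indicator_of_notMem (show r ∉ Ioi ρ from h1)]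
        linarith
    have hd : 0 ≤ 1 / (2 * δ) := by positivity
    calc φ (r / R) * (r * |jm (f r) v|) * r ≤ φ (r / R) * (r * (‖f r‖ * ‖v‖)) * r := by gcongr
      _ = (φ (r / R) * (r * ‖f r‖) * ‖v‖) * r := by ring
      _ ≤ (δ / 2 * ‖v‖ ^ 2 + (1 / (2 * δ)) * (φ (r / R) * (r * ‖f r‖)) ^ 2) * r := by gcongr
      _ = δ / 2 * (‖v‖ ^ 2 * r) + (1 / (2 * δ)) * ((φ (r / R) * (r * ‖f r‖)) ^ 2 * r) := by ring
      _ ≤ _ := by gcongr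

end

/-- the localized virial functional vanishes at the blowup time. -/
theorem stmt11 (m : ℕ) (hm : 1 ≤ m) (u : ℝ → ℝ → ℂ)
    (hu : IsCSS m (Set.Ioo (-1 : ℝ) 0) u)
    (hmass : ∀ t ∈ Set.Ioo (-1 : ℝ) 0, L2sq (u t) = 8 * Real.pi * (m + 1))
    (hblow : Tendsto
      (fun t => Real.sqrt (2 * Real.pi * ∫ r in Set.Ioi (0:ℝ), ‖deriv (u t) r‖ ^ 2 * r))
      (nhdsWithin 0 (Set.Ioo (-1 : ℝ) 0)) atTop) :
    ∀ R : ℝ, 0 < R → ∀ φ : ℝ → ℝ, ContDiff ℝ (⊤ : ℕ∞) φ →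
      (∀ x : ℝ, 0 ≤ x → φ x ∈ Set.Icc (0:ℝ) 1) →
      (∀ x ∈ Set.Icc (0:ℝ) 1, φ x = 1) → (∀ x : ℝ, 2 ≤ x → φ x = 0) →
      Tendsto (fun t => 2 * Real.pi * ∫ r in Set.Ioi (0:ℝ),
          φ (r / R) * ((starRingEnd ℂ) (u t r) * ((r : ℂ) * deriv (u t) r)).im * r)
        (nhdsWithin 0 (Set.Ioo (-1 : ℝ) 0)) (nhds 0) := by
  intro R hR φ _ hφ _ hφ2
  obtain ⟨t0, F, ht0, _, h, hF⟩ := build m hm u hu hmass hblow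
  obtain ⟨s, hs1, hs2⟩ := exists_between ht0
  obtain ⟨KE, hKE, hE⟩ := h.energy (s := s) ⟨hs1, hs2⟩
  have hpi := Real.pi_pos
  rw [Metric.tendsto_nhds]
  intro ε hε
  set ε' : ℝ := ε / (2 * Real.pi) with hε'
  have hε'0 : 0 < ε' := by positivity
  set δ : ℝ := ε' / (2 * (KE + 1)) with hδ
  have hδ0 : 0 < δ := by positivity
  set ρ : ℝ := Real.sqrt (δ * ε' / (4 * (4 * (m + 1)))) with hρ
  have hρ0 : 0 < ρ := Real.sqrt_pos.2 (by positivity)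
  set η : ℝ := δ * ε' / (4 * (4 * R ^ 2)) with hη
  have hη0 : 0 < η := by positivity
  obtain ⟨Λ, hΛ⟩ := conc m hm hKE hη0 hρ0
  have ev1 := hblow.eventually (eventually_gt_atTop (Real.sqrt (2 * Real.pi * max Λ 0)))
  have ev2 : ∀ᶠ t in nhdsWithin 0 (Ioo (-1:ℝ) 0), s < t :=
    mem_nhdsWithin_of_mem_nhds (Ioi_mem_nhds hs2)
  filter_upwards [ev1, ev2, self_mem_nhdsWithin] with t h1 h2 h3
  have hI : t ∈ Ioo t0 0 := ⟨hs1.trans h2, h3.2⟩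
  have e1 : ∫ r in Ioi (0:ℝ), ‖deriv (u t) r‖ ^ 2 * r = ∫ r in Ioi (0:ℝ), ‖pr F (t, r)‖ ^ 2 * r :=
    setIntegral_congr_fun measurableSet_Ioi fun r hr => by simp only [(hF t hI r hr).2]
  have e2 : ∫ r in Ioi (0:ℝ), φ (r / R) * ((starRingEnd ℂ) (u t r) * ((r : ℂ) * deriv (u t) r)).im * r
      = ∫ r in Ioi (0:ℝ), φ (r / R) * ((starRingEnd ℂ) (F (t, r)) * ((r : ℂ) * pr F (t, r))).im * r :=
    setIntegral_congr_fun measurableSet_Ioi fun r hr => by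
      simp only [(hF t hI r hr).2, (hF t hI r hr).1]
  have hL : Λ < ∫ r in Ioi (0:ℝ), ‖pr F (t, r)‖ ^ 2 * r := by
    have := lt_of_not_ge fun hc => absurd h1 (not_lt.2 (Real.sqrt_le_sqrt hc))
    rw [e1] at this
    exact (le_max_left _ _).trans_lt (lt_of_mul_lt_mul_left this (by positivity))
  have hfr := pr_smooth (oΩ t0) h.smooth
  have cv : ContinuousOn (fun r => ‖vF m F t r‖ ^ 2 * r) (Ioi 0) := by
    have : ContinuousOn (vF m F t) (Ioi 0) := fun r hr =>
      (h.hV1 hI hr).continuousAt.continuousWithinAt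
    exact (this.norm.pow 2).mul continuousOn_id
  have hl := hE t h2.le h3.2
  have nn : 0 ≤ᵐ[volume.restrict (Ioi 0)] (fun r => ‖vF m F t r‖ ^ 2 * r) :=
    (ae_restrict_iff' measurableSet_Ioi).2 (Eventually.of_forall fun r (hr : 0 < r) => by
      simp only [Pi.zero_apply]; positivity)
  have hv : IntegrableOn (fun r => ‖vF m F t r‖ ^ 2 * r) (Ioi 0) := by
    refine ⟨cv.aestronglyMeasurable measurableSet_Ioi, ?_⟩
    rw [hasFiniteIntegral_iff_ofReal nn]
    exact hl.trans_lt ENNReal.ofReal_lt_top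
  have hv2 : ∫ r in Ioi 0, ‖vF m F t r‖ ^ 2 * r ≤ KE := by
    rw [← ofReal_integral_eq_lintegral_ofReal hv nn] at hl
    exact (ENNReal.ofReal_le_ofReal_iff hKE).1 hl
  obtain ⟨K, hK⟩ := h.h1 t t hI.1 hI.2
  have htail := hΛ (fun r => F (t, r)) (fun r => pr F (t, r))
    (fun r => hda_pr (oΩ t0) h.smooth (mΩ hI r)) (sect_r hfr hI) (h.int t hI) (h.mass t hI) hv hv2
    (hK t ⟨le_rfl, le_rfl⟩).1 hL
  have fin := virial_bd m (f := fun r => F (t, r)) (f1 := fun r => pr F (t, r)) hR hδ0 hφ hφ2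
    (h.int t hI) (h.mass t hI) hv hv2 hρ0 htail
  rw [e2, dist_zero_right, Real.norm_eq_abs, abs_mul, abs_of_pos (by positivity : 0 < 2 * Real.pi)]
  have b : δ / 2 * KE + (1 / (2 * δ)) * (ρ ^ 2 * (4 * (m + 1)) + 4 * R ^ 2 * η) < ε' := by
    have r1 : ρ ^ 2 = δ * ε' / (4 * (4 * (m + 1))) := Real.sq_sqrt (by positivity)
    have r2 : (1 / (2 * δ)) * (ρ ^ 2 * (4 * (m + 1)) + 4 * R ^ 2 * η) = ε' / 4 := by
      rw [r1, hη]
      clear_value δ ε'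
      field_simp
      ring
    have r3 : δ / 2 * KE ≤ ε' / 4 := by
      have : δ * (KE + 1) = ε' / 2 := by rw [hδ]; field_simp
      nlinarith
    rw [r2]; linarith
  have := fin.trans_lt b
  rw [hε', lt_div_iff₀' (by positivity)] at this
  exact this
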